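/- arXiv:2503.17751 — 2 statements merged into one kernel-verified Lean document; each statement's English description precedes it below -/
import Mathlib

section
/- Let k be a field of characteristic 0 and let B be a regular local k-algebra whose residue field is formally real. Then B is formally real, and so is its field of fractions. -/
/-!
Let `R` be a regular local ring that is not a field. Prime avoidance gives `x ∈ 𝔪 \ 𝔪²` outside
every minimal prime, and then `R ⧸ (x)` is regular of smaller dimension with the same residue field.

* If `R ⧸ (x)` is a domain, then `(x)` contains a minimal prime `p`; as `x ∉ p`, we get `p = x p`,
  so `p = 0` by Nakayama and `R` is a domain.
* If `R ⧸ (x)` is formally real and `a₁² + ⋯ + aᵣ² = 0`, then `x` divides every `aᵢ`. Dividing the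
  relation by `x²` and repeating, each `aᵢ` lies in `⋂ₙ (xⁿ)`, which is zero by Krull's intersection
  theorem.

This descent takes the place of comparing `R` with its completion, a power series ring over the
residue field.
-/

open IsLocalRing

universe u

section FormallyReal

theorem isSumSq_map {R S : Type*} [Semiring R] [Semiring S] (f : R →+* S) {s : R}
    (hs : IsSumSq s) : IsSumSq (f s) := by
  induction hs with
  | zero => simp
  | sq_add a _ ih =>
    rw [map_add, map_mul]
    exact ih.sq_add (f a)

theorem isFormallyReal_iff_forall_isSumSq {R : Type*} [Ring R] [IsReduced R] :
    IsFormallyReal R ↔ ∀ x : R, IsSumSq x → IsSumSq (-x) → x = 0 := by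
  refine ⟨fun _ _ ↦ IsFormallyReal.eq_zero_of_isSumSq_of_neg_isSumSq, fun h ↦ ?_⟩
  refine .of_eq_zero_of_mul_self_of_eq_zero_of_add ?_ fun hs ht hst ↦ h _ hs ?_
  · exact fun hmul ↦ eq_zero_of_pow_eq_zero (n := 2) ((sq _).trans hmul)
  · rwa [neg_eq_of_add_eq_zero_right hst]

theorem eq_zero_and_eq_zero_of_mul_self_add_eq_zero {R : Type*} [Ring R] [IsFormallyReal R]
    {a s : R} (hs : IsSumSq s) (h : a * a + s = 0) : a = 0 ∧ s = 0 :=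
  ⟨eq_zero_of_pow_eq_zero (n := 2)
    ((sq a).trans (IsFormallyReal.eq_zero_of_add_right (.mul_self a) hs h)),
    IsFormallyReal.eq_zero_of_add_left (.mul_self a) hs h⟩

theorem isFormallyReal_of_injective {R S : Type*} [Ring R] [Ring S] [IsFormallyReal S]
    (f : R →+* S) (hf : Function.Injective f) : IsFormallyReal R := by
  refine .of_eq_zero_of_eq_zero_of_mul_self_add fun {s a} hs h ↦ ?_
  have hmap : f a * f a + f s = 0 := by rw [← map_mul, ← map_add, h, map_zero]
  exact (map_eq_zero_iff f hf).mp
    (eq_zero_and_eq_zero_of_mul_self_add_eq_zero (isSumSq_map f hs) hmap).1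

theorem exists_isSumSq_algebraMap_eq_mul_self_mul {R K : Type*} [CommRing R] [CommRing K]
    [Algebra R K] (M : Submonoid R) [IsLocalization M K] {s : K} (hs : IsSumSq s) :
    ∃ m ∈ M, ∃ t : R, IsSumSq t ∧ algebraMap R K t = algebraMap R K (m * m) * s := by
  induction hs with
  | zero => exact ⟨1, M.one_mem, 0, .zero, by simp⟩
  | sq_add a _ ih =>
    obtain ⟨m, hm, t, ht, hts⟩ := ih
    obtain ⟨⟨r, c⟩, hrc⟩ := IsLocalization.surj M a
    refine ⟨c * m, M.mul_mem c.2 hm, (m * r) * (m * r) + (c * c) * t,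
      ((IsSumSq.mul_self _).mul ht).sq_add _, ?_⟩
    simp only [map_add, map_mul, hts, ← hrc]
    ring

theorem isFormallyReal_of_isLocalization {R K : Type*} [CommRing R] [CommRing K] [Algebra R K]
    (M : Submonoid R) [IsLocalization M K] [IsFormallyReal R] : IsFormallyReal K := by
  refine .of_eq_zero_of_eq_zero_of_mul_self_add fun {s a} hs h ↦ ?_
  obtain ⟨m, hm, t, ht, hts⟩ := exists_isSumSq_algebraMap_eq_mul_self_mul M hs
  obtain ⟨⟨r, c⟩, hrc⟩ := IsLocalization.surj M a
  have hcleared : algebraMap R K ((m * r) * (m * r) + (c * c) * t) = algebraMap R K 0 := by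
    simp only [map_add, map_mul, map_zero, hts, ← hrc]
    linear_combination (algebraMap R K c * algebraMap R K m) ^ 2 * h
  obtain ⟨d, hd⟩ := (IsLocalization.eq_iff_exists M K).mp hcleared
  have hnum : d * (m * r) = 0 := by
    refine (eq_zero_and_eq_zero_of_mul_self_add_eq_zero
      (s := (d * c) * (d * c) * t) ((IsSumSq.mul_self _).mul ht) ?_).1
    linear_combination d * hd
  have hunit : IsUnit (algebraMap R K (d * m * c)) :=
    IsLocalization.map_units K (⟨_, M.mul_mem (M.mul_mem d.2 hm) c.2⟩ : M)
  rw [← hunit.mul_right_eq_zero]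
  calc algebraMap R K (d * m * c) * a = algebraMap R K (d * (m * r)) := by
        simp only [map_mul, ← hrc]
        ring
    _ = 0 := by rw [hnum, map_zero]

variable {R : Type*} [CommRing R] {x : R}

theorem dvd_and_dvd_of_dvd_mul_self_add [IsFormallyReal (R ⧸ Ideal.span {x})] {a s : R}
    (hs : IsSumSq s) (h : x ∣ a * a + s) : x ∣ a ∧ x ∣ s := by
  simp only [← Ideal.mem_span_singleton, ← Ideal.Quotient.eq_zero_iff_mem, map_add,
    map_mul] at h ⊢
  exact eq_zero_and_eq_zero_of_mul_self_add_eq_zero (isSumSq_map _ hs) h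

theorem exists_isSumSq_eq_mul_self_mul_of_dvd [IsFormallyReal (R ⧸ Ideal.span {x})] {s : R}
    (hs : IsSumSq s) (h : x ∣ s) : ∃ t, IsSumSq t ∧ s = x * x * t := by
  induction hs with
  | zero => exact ⟨0, .zero, by simp⟩
  | sq_add a hs ih =>
    obtain ⟨⟨b, rfl⟩, hxs⟩ := dvd_and_dvd_of_dvd_mul_self_add hs h
    obtain ⟨t, ht, rfl⟩ := ih hxs
    exact ⟨b * b + t, ht.sq_add b, by ring⟩

theorem pow_dvd_of_mul_self_add_eq_zero [IsFormallyReal (R ⧸ Ideal.span {x})]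
    (hx : x ∈ nonZeroDivisors R) (n : ℕ) {a s : R} (hs : IsSumSq s) (h : a * a + s = 0) :
    x ^ n ∣ a := by
  induction n generalizing a s with
  | zero => simp
  | succ n ih =>
    obtain ⟨⟨b, rfl⟩, hxs⟩ := dvd_and_dvd_of_dvd_mul_self_add hs (h ▸ dvd_zero x)
    obtain ⟨t, ht, rfl⟩ := exists_isSumSq_eq_mul_self_mul_of_dvd hs hxs
    have hbt : b * b + t = 0 := by
      rw [← mul_left_mem_nonZeroDivisors_eq_zero_iff (mul_mem hx hx), ← h]
      ring
    rw [pow_succ']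
    exact mul_dvd_mul_left x (ih ht hbt)

theorem isFormallyReal_of_quotient_span_singleton [IsHausdorff (Ideal.span {x}) R]
    [IsFormallyReal (R ⧸ Ideal.span {x})] (hx : x ∈ nonZeroDivisors R) : IsFormallyReal R := by
  refine .of_eq_zero_of_eq_zero_of_mul_self_add fun {s a} hs h ↦ ?_
  refine IsHausdorff.haus ‹_› a fun n ↦ ?_
  rw [SModEq.zero, smul_eq_mul, Ideal.mul_top, Ideal.span_singleton_pow,
    Ideal.mem_span_singleton]
  exact pow_dvd_of_mul_self_add_eq_zero hx n hs h

end FormallyReal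

section LocalRing

variable {R : Type*} [CommRing R]

theorem eq_bot_of_le_span_singleton_of_notMem {p : Ideal R} [p.IsPrime] (hp : p.FG) {x : R}
    (hx : x ∈ (⊥ : Ideal R).jacobson) (hpx : p ≤ Ideal.span {x}) (hxp : x ∉ p) : p = ⊥ := by
  have hle : p ≤ Ideal.span {x} • p := fun y hy ↦ by
    obtain ⟨z, rfl⟩ := Ideal.mem_span_singleton.mp (hpx hy)
    exact Ideal.mul_mem_mul (Ideal.mem_span_singleton_self x)
      ((Ideal.IsPrime.mem_or_mem ‹_› hy).resolve_left hxp)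
  exact Submodule.eq_bot_of_le_smul_of_le_jacobson_bot _ p hp hle
    ((Ideal.span_singleton_le_iff_mem _).mpr hx)

variable [IsLocalRing R]

theorem isFormallyReal_residueField_of_surjective {S : Type*} [CommRing S] [IsLocalRing S]
    [IsFormallyReal (ResidueField R)] (f : R →+* S) (hf : Function.Surjective f) :
    IsFormallyReal (ResidueField S) := by
  have := IsLocalHom.of_surjective f hf
  have hsurj : Function.Surjective (ResidueField.map f) := by
    refine .of_comp (g := residue R) ?_
    rw [← RingHom.coe_comp, ResidueField.map_comp_residue, RingHom.coe_comp]
    exact residue_surjective.comp hf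
  let e := RingEquiv.ofBijective (ResidueField.map f) ⟨(ResidueField.map f).injective, hsurj⟩
  exact isFormallyReal_of_injective e.symm.toRingHom e.symm.injective

variable [IsNoetherianRing R] {x : R}

theorem exists_ncard_add_one_eq_finrank_span_insert_eq_top {K V : Type*} [DivisionRing K]
    [AddCommGroup V] [Module K V] [FiniteDimensional K V] {v : V} (hv : v ≠ 0) :
    ∃ t : Set V, t.Finite ∧ t.ncard + 1 = Module.finrank K V ∧
      Submodule.span K (insert v t) = ⊤ := by
  have hli : LinearIndepOn K id {v} := .singleton hv
  let b := Module.Basis.extend hli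
  have hvb : v ∈ hli.extend (Set.subset_univ _) := hli.subset_extend _ rfl
  have hfin : (hli.extend (Set.subset_univ _)).Finite := Module.Finite.finite_basis b
  refine ⟨hli.extend (Set.subset_univ _) \ {v}, hfin.sdiff, ?_, ?_⟩
  · rw [Set.ncard_sdiff_singleton_add_one hvb hfin, Module.finrank_eq_nat_card_basis b]
    rfl
  · rw [Set.insert_sdiff_singleton, Set.insert_eq_of_mem hvb, ← b.span_eq,
      Module.Basis.range_extend]

theorem exists_span_insert_eq_maximalIdeal (hx : x ∈ maximalIdeal R)
    (hx2 : x ∉ maximalIdeal R ^ 2) :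
    ∃ s : Set R, s.Finite ∧ Ideal.span (insert x s) = maximalIdeal R ∧
      s.ncard + 1 = (maximalIdeal R).spanFinrank := by
  let x' : maximalIdeal R := ⟨x, hx⟩
  have hv : (maximalIdeal R).toCotangent x' ≠ 0 := by
    rwa [Ne, Ideal.toCotangent_eq_zero]
  obtain ⟨t, ht, hcard, hspan⟩ :=
    exists_ncard_add_one_eq_finrank_span_insert_eq_top (K := ResidueField R) hv
  obtain ⟨σ, hσ⟩ := (maximalIdeal R).toCotangent_surjective.hasRightInverse
  refine ⟨Subtype.val ∘ σ '' t, ht.image _, ?_, ?_⟩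
  · have hlift : (maximalIdeal R).toCotangent '' insert x' (σ '' t) =
        insert ((maximalIdeal R).toCotangent x') t := by
      rw [Set.image_insert_eq, hσ.image_image]
    have htop := CotangentSpace.span_image_eq_top_iff.mp (hlift ▸ hspan)
    have := congrArg (Submodule.map (maximalIdeal R).subtype) htop
    rwa [Submodule.map_span, Submodule.map_subtype_top, Set.image_insert_eq,
      Set.image_image] at this
  · rw [Set.ncard_image_of_injective _ (Subtype.val_injective.comp hσ.injective), hcard,
      spanFinrank_maximalIdeal_eq_finrank_cotangentSpace]

theorem spanFinrank_maximalIdeal_quotient_lt [IsLocalRing (R ⧸ Ideal.span {x})]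
    (hx : x ∈ maximalIdeal R) (hx2 : x ∉ maximalIdeal R ^ 2) :
    (maximalIdeal (R ⧸ Ideal.span {x})).spanFinrank < (maximalIdeal R).spanFinrank := by
  obtain ⟨s, hs, hspan, hcard⟩ := exists_span_insert_eq_maximalIdeal hx hx2
  have hmk : Ideal.Quotient.mk (Ideal.span {x}) x = 0 :=
    Ideal.Quotient.eq_zero_iff_mem.mpr (Ideal.mem_span_singleton_self x)
  have hmax : maximalIdeal (R ⧸ Ideal.span {x}) =
      Ideal.span (Ideal.Quotient.mk (Ideal.span {x}) '' s) := by
    rw [← map_maximalIdeal_of_surjective _ Ideal.Quotient.mk_surjective, ← hspan,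
      Ideal.map_span, Set.image_insert_eq, hmk, Ideal.span_insert_zero]
  rw [hmax]
  exact ((Submodule.spanFinrank_span_le_ncard_of_finite (hs.image _)).trans
    (Set.ncard_image_le hs)).trans_lt (hcard ▸ Nat.lt_succ_self _)

theorem exists_mem_maximalIdeal_notMem_sq_notMem_minimalPrimes (hdim : ringKrullDim R ≠ 0) :
    ∃ x ∈ maximalIdeal R, x ∉ maximalIdeal R ^ 2 ∧ ∀ p ∈ minimalPrimes R, x ∉ p := by
  have hmin : maximalIdeal R ∉ minimalPrimes R := fun h ↦ hdim <| by
    rw [← maximalIdeal_height_eq_ringKrullDim, Ideal.height_eq_zero_iff.mpr h]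
    rfl
  have hsq : ¬ maximalIdeal R ≤ maximalIdeal R ^ 2 := fun h ↦ hdim <| by
    have hidem : IsIdempotentElem (maximalIdeal R) :=
      Ideal.mul_le_left.antisymm (sq (maximalIdeal R) ▸ h)
    exact ringKrullDim_eq_zero_of_isField
      (subsingleton_cotangentSpace_iff.mp ((Ideal.cotangent_subsingleton_iff _).mpr hidem))
  by_contra! hcover
  have hsub : (maximalIdeal R : Set R) ⊆
      ⋃ I ∈ insert (maximalIdeal R ^ 2) (minimalPrimes R), (I : Set R) := fun x hx ↦ by
    by_cases hx2 : x ∈ maximalIdeal R ^ 2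
    · exact Set.mem_biUnion (Set.mem_insert _ _) hx2
    · obtain ⟨p, hp, hxp⟩ := hcover x hx hx2
      exact Set.mem_biUnion (Set.mem_insert_of_mem _ hp) hxp
  obtain ⟨I, hI, hle⟩ := (Ideal.subset_union_prime_finite
    ((minimalPrimes.finite_of_isNoetherianRing R).insert _) (f := id)
    (maximalIdeal R ^ 2) (maximalIdeal R ^ 2) fun I hI hne _ ↦
      (hI.resolve_left hne).1.1).mp hsub
  rcases hI with rfl | hI
  · exact hsq hle
  · exact hmin ((IsLocalRing.maximalIdeal.isMaximal R).eq_of_le hI.1.1.ne_top hle ▸ hI)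

end LocalRing

section RegularLocalRing

variable {R : Type u} [CommRing R] [IsRegularLocalRing R]

theorem isField_of_isRegularLocalRing_of_ringKrullDim_eq_zero (hdim : ringKrullDim R = 0) :
    IsField R := by
  rw [← IsRegularLocalRing.spanFinrank_maximalIdeal] at hdim
  rw [isField_iff_maximalIdeal_eq, ← Submodule.spanFinrank_eq_zero_iff_eq_bot
    (maximalIdeal R).fg_of_isNoetherianRing]
  exact_mod_cast hdim

theorem isRegularLocalRing_quotient_span_singleton {x : R} (hx : x ∈ maximalIdeal R)
    (hx2 : x ∉ maximalIdeal R ^ 2) : IsRegularLocalRing (R ⧸ Ideal.span {x}) := by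
  have : Nontrivial (R ⧸ Ideal.span {x}) :=
    Ideal.Quotient.nontrivial_iff.mpr (by rwa [Ne, Ideal.span_singleton_eq_top])
  have : IsLocalRing (R ⧸ Ideal.span {x}) := .of_surjective' _ Ideal.Quotient.mk_surjective
  refine .of_spanFinrank_maximalIdeal_le _ (ENat.WithBot.add_le_add_one_right_iff.mp ?_)
  calc ((maximalIdeal (R ⧸ Ideal.span {x})).spanFinrank + 1 : WithBot ℕ∞)
      ≤ (maximalIdeal R).spanFinrank := by
        exact_mod_cast spanFinrank_maximalIdeal_quotient_lt hx hx2
    _ = (maximalIdeal R).height := by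
        rw [IsRegularLocalRing.spanFinrank_maximalIdeal, maximalIdeal_height_eq_ringKrullDim]
    _ ≤ ringKrullDim (R ⧸ Ideal.span {x}) + 1 := Ideal.height_le_ringKrullDim_quotient_add_one hx

theorem isRegularLocalRing_induction
    {motive : (R : Type u) → [CommRing R] → [IsRegularLocalRing R] → Prop}
    (isField : ∀ (R : Type u) [CommRing R] [IsRegularLocalRing R], IsField R → motive R)
    (quotient : ∀ (R : Type u) [CommRing R] [IsRegularLocalRing R] (x : R)
      [IsRegularLocalRing (R ⧸ Ideal.span {x})], x ∈ maximalIdeal R →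
      (∀ p ∈ minimalPrimes R, x ∉ p) → motive (R ⧸ Ideal.span {x}) → motive R)
    (R : Type u) [CommRing R] [IsRegularLocalRing R] : motive R := by
  induction hd : (maximalIdeal R).spanFinrank using Nat.strong_induction_on generalizing R with
  | _ d ih =>
    by_cases hdim : ringKrullDim R = 0
    · exact isField R (isField_of_isRegularLocalRing_of_ringKrullDim_eq_zero hdim)
    · obtain ⟨x, hx, hx2, hmin⟩ := exists_mem_maximalIdeal_notMem_sq_notMem_minimalPrimes hdim
      have := isRegularLocalRing_quotient_span_singleton hx hx2
      exact quotient R x hx hmin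
        (ih _ (hd ▸ spanFinrank_maximalIdeal_quotient_lt hx hx2) _ rfl)

theorem isDomain_of_isRegularLocalRing (R : Type u) [CommRing R] [IsRegularLocalRing R] :
    IsDomain R := by
  refine isRegularLocalRing_induction (motive := fun R _ _ ↦ IsDomain R)
    (fun R _ _ hR ↦ hR.isDomain) (fun R _ _ x _ hx hmin hdom ↦ ?_) R
  have hprime : (Ideal.span {x}).IsPrime := (Ideal.Quotient.isDomain_iff_prime _).mp hdom
  obtain ⟨p, hp, hpx⟩ := Ideal.exists_minimalPrimes_le (bot_le (a := Ideal.span {x}))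
  have : p.IsPrime := hp.1.1
  have hbot : p = ⊥ := eq_bot_of_le_span_singleton_of_notMem p.fg_of_isNoetherianRing
    (maximalIdeal_le_jacobson _ hx) hpx (hmin p hp)
  have : (⊥ : Ideal R).IsPrime := hbot ▸ ‹p.IsPrime›
  exact IsDomain.of_bot_isPrime R

theorem isFormallyReal_of_isFormallyReal_residueField (R : Type u) [CommRing R]
    [IsRegularLocalRing R] [hres : IsFormallyReal (ResidueField R)] : IsFormallyReal R := by
  refine isRegularLocalRing_induction
    (motive := fun R _ _ ↦ IsFormallyReal (ResidueField R) → IsFormallyReal R)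
    (fun R _ _ hR _ ↦ ?_) (fun R _ _ x _ hx hmin ih _ ↦ ?_) R hres
  · refine isFormallyReal_of_injective (residue R) ?_
    rwa [RingHom.injective_iff_ker_eq_bot, ker_residue, ← isField_iff_maximalIdeal_eq]
  · have := isDomain_of_isRegularLocalRing R
    have hx0 : x ≠ 0 := fun h ↦ hmin ⊥ (by simp [IsDomain.minimalPrimes_eq_singleton_bot]) h
    have := ih (isFormallyReal_residueField_of_surjective (Ideal.Quotient.mk (Ideal.span {x}))
      Ideal.Quotient.mk_surjective)
    have : IsHausdorff (Ideal.span {x}) R :=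
      .of_isLocalRing _ _ (by rwa [Ne, Ideal.span_singleton_eq_top])
    exact isFormallyReal_of_quotient_span_singleton (mem_nonZeroDivisors_of_ne_zero hx0)

end RegularLocalRing

/-- A regular local algebra `B` over a field of characteristic zero whose residue field is
formally real is itself formally real, and so is its field of fractions. Regularity is
expressed as: `B` is Noetherian local and the dimension of its cotangent space over the
residue field equals its Krull dimension. -/
theorem stmt7 (k B : Type) [Field k] [CharZero k] [CommRing B] [Algebra k B]
    [IsNoetherianRing B] [IsLocalRing B]
    (hreg : ((Module.finrank (IsLocalRing.ResidueField B)
        (IsLocalRing.CotangentSpace B) : ℕ∞) : WithBot ℕ∞) = ringKrullDim B)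
    (hres : ∀ x : IsLocalRing.ResidueField B, IsSumSq x → IsSumSq (-x) → x = 0) :
    (∀ x : B, IsSumSq x → IsSumSq (-x) → x = 0) ∧
    (∀ x : FractionRing B, IsSumSq x → IsSumSq (-x) → x = 0) := by
  have : IsRegularLocalRing B := (IsRegularLocalRing.iff_finrank_cotangentSpace B).mpr hreg
  have := isDomain_of_isRegularLocalRing B
  have : IsFormallyReal (ResidueField B) := isFormallyReal_iff_forall_isSumSq.mpr hres
  have hB : IsFormallyReal B := isFormallyReal_of_isFormallyReal_residueField B
  have hK : IsFormallyReal (FractionRing B) := isFormallyReal_of_isLocalization (nonZeroDivisors B)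
  exact ⟨isFormallyReal_iff_forall_isSumSq.mp hB, isFormallyReal_iff_forall_isSumSq.mp hK⟩
end

section
/- Let f ∈ ℝ[x, y, z] be a square-free polynomial that is semidefinite on ℝ³ (i.e., f ≥ 0 everywhere or f ≤ 0 everywhere on ℝ³). Then the Pythagoras number of ℝ[x, y, z]/(f) is finite. -/
/-- `B` has finite Pythagoras number: there is `n` such that every sum of squares in `B`
is a sum of `n` squares. -/
def HasFinitePythagorasNumber (B : Type) [CommRing B] : Prop :=
  ∃ n : ℕ, ∀ b : B, IsSumSq b → ∃ f : Fin n → B, b = ∑ i, f i ^ 2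

/-
After a change of sign `f ≥ 0` on `ℝ³`, so by Artin's theorem `f` is a sum of squares of rational
functions. Clearing denominators and cancelling common prime factors, which is possible because `f`
is square-free, gives `g₁, …, gₙ` with `f ∣ ∑ gᵢ²` and without a common prime factor. In
`A = ℝ[x, y, z]/(f)` the squares `gᵢ²` therefore lie in the ideal `J` generated by the squares whose
negatives are sums of squares, and since no prime divides all the `gᵢ`, `J` has codimension at
least two in `ℝ[x, y, z]`, that is `dim A/J ≤ 1`.

If `-x²` is a sum of `n` squares, then every multiple `a x² = ((a + 1)x/2)² - ((a - 1)/2)² x²` is a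
sum of `n + 1` squares. As `J` is finitely generated, its elements are sums of boundedly many
squares, and it suffices to bound the Pythagoras number of `A/J`. By Noether normalization `A/J` is
finite over `ℝ[t]`, and a sum of squares in it becomes the value of a quadratic form with Gram
matrix `V Vᵀ` over `ℝ[t]`. Over `ℂ[t]` a relation between the columns of `V` can be removed by
unitary changes of basis and Blaschke factors without changing `V Vᴴ`, so that `V` may be taken
square. The real and imaginary parts of the square matrix yield `V Vᵀ = P Pᵀ + Q Qᵀ` with `P` and
`Q` square of size independent of the number of squares.
-/

section IntermediateValue

open Polynomial Set

/-- The intermediate value theorem for polynomials over a linearly ordered field. Among ordered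
fields it characterizes the real closed ones, and it is the only form in which real closedness is
used here. -/
def PolyIVT (R : Type*) [Field R] [LinearOrder R] : Prop :=
  ∀ (p : R[X]) (a b : R), a < b → p.eval a < 0 → 0 < p.eval b → ∃ c ∈ Ioo a b, p.eval c = 0

theorem polyIVT_real : PolyIVT ℝ := by
  intro p a b hab ha hb
  obtain ⟨c, hc, h⟩ := intermediate_value_Ioo hab.le p.continuous.continuousOn ⟨ha, hb⟩
  exact ⟨c, hc, h⟩

theorem exists_eq_X_sub_C_pow_mul_X_sub_C_pow_mul {K : Type*} [Field K] {p : K[X]} {a b : K}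
    (hab : a ≠ b) (hp : p ≠ 0) (ha : p.eval a = 0) (hb : p.eval b = 0) :
    ∃ (m n : ℕ) (q : K[X]), p = (X - C a) ^ (m + 1) * (X - C b) ^ (n + 1) * q ∧
      q.eval a ≠ 0 ∧ q.eval b ≠ 0 := by
  obtain ⟨r, hpr, hra⟩ := exists_eq_pow_rootMultiplicity_mul_and_not_dvd p hp a
  have hr : r ≠ 0 := by rintro rfl; simp at hra
  obtain ⟨q, hrq, hqb⟩ := exists_eq_pow_rootMultiplicity_mul_and_not_dvd r hr b
  rw [dvd_iff_isRoot, IsRoot.def] at hra hqb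
  have hrb : r.eval b = 0 := by
    rw [hpr, eval_mul, eval_pow] at hb
    exact (mul_eq_zero.mp hb).resolve_left
      (pow_ne_zero _ (by simpa [sub_eq_zero] using hab.symm))
  obtain ⟨m, hm⟩ := Nat.exists_eq_add_one_of_ne_zero ((rootMultiplicity_pos hp).mpr ha).ne'
  obtain ⟨n, hn⟩ := Nat.exists_eq_add_one_of_ne_zero ((rootMultiplicity_pos hr).mpr hrb).ne'
  refine ⟨m, n, q, ?_, fun hqa => hra ?_, hqb⟩
  · rw [hm] at hpr
    rw [hn] at hrq
    rw [hpr, hrq, mul_assoc]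
  · rw [hrq, eval_mul, hqa, mul_zero]

namespace PolyIVT

variable {R : Type*} [Field R] [LinearOrder R] [IsStrictOrderedRing R] {p : R[X]} {a b : R}

theorem exists_root_of_mul_neg (h : PolyIVT R) (hab : p.eval a * p.eval b < 0) :
    ∃ c ∈ uIoo a b, p.eval c = 0 := by
  wlog hlt : a < b generalizing a b
  · rw [uIoo_comm]
    refine this (by rwa [mul_comm]) ((not_lt.mp hlt).lt_of_ne ?_)
    rintro rfl
    exact hab.not_ge (mul_self_nonneg _)
  rw [uIoo_of_lt hlt]
  rcases mul_neg_iff.mp hab with ⟨ha, hb⟩ | ⟨ha, hb⟩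
  · simpa using h (-p) a b hlt (by simpa using ha) (by simpa using hb)
  · exact h p a b hlt ha hb

theorem eval_pos_iff_of_no_root (h : PolyIVT R) (hno : ∀ c ∈ uIcc a b, p.eval c ≠ 0) :
    0 < p.eval a ↔ 0 < p.eval b := by
  have hprod : 0 < p.eval a * p.eval b := by
    refine lt_of_not_ge fun hle => ?_
    obtain ⟨c, hc, hc0⟩ := h.exists_root_of_mul_neg
      (hle.lt_of_ne (mul_ne_zero (hno a left_mem_uIcc) (hno b right_mem_uIcc)))
    exact hno c (Ioo_subset_Icc_self hc) hc0
  exact ⟨fun ha => (mul_pos_iff_of_pos_left ha).mp hprod,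
    fun hb => (mul_pos_iff_of_pos_right hb).mp hprod⟩

theorem forall_pos_or_forall_neg (h : PolyIVT R) {s : Set R} (hs : s.OrdConnected)
    (hno : ∀ c ∈ s, p.eval c ≠ 0) : (∀ c ∈ s, 0 < p.eval c) ∨ ∀ c ∈ s, p.eval c < 0 := by
  by_contra! hcon
  obtain ⟨⟨c, hc, hc0⟩, ⟨d, hd, hd0⟩⟩ := hcon
  exact hc0.not_gt ((h.eval_pos_iff_of_no_root fun x hx => hno x (hs.uIcc_subset hc hd hx)).mpr
    (hd0.lt_of_ne (hno d hd).symm))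

theorem eval_nonneg_of_forall_mem_Ioo (h : PolyIVT R) (hpos : ∀ c ∈ Ioo a b, 0 < p.eval c)
    {x : R} (hab : a < b) (hx : x ∈ Icc a b) : 0 ≤ p.eval x := by
  by_contra! hneg
  obtain ⟨d, hd⟩ := exists_between hab
  obtain ⟨c, ⟨hc₁, hc₂⟩, hc⟩ := h.exists_root_of_mul_neg (mul_neg_of_neg_of_pos hneg (hpos d hd))
  exact (hpos c ⟨(le_min hx.1 hd.1.le).trans_lt hc₁, hc₂.trans_le (max_le hx.2 hd.2.le)⟩).ne' hc

theorem exists_derivative_root_of_consecutive (h : PolyIVT R) (hab : a < b) (hp : p ≠ 0)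
    (ha : p.eval a = 0) (hb : p.eval b = 0) (hno : ∀ c ∈ Ioo a b, p.eval c ≠ 0) :
    ∃ c ∈ Ioo a b, (derivative p).eval c = 0 := by
  obtain ⟨m, n, q, rfl, hqa, hqb⟩ := exists_eq_X_sub_C_pow_mul_X_sub_C_pow_mul hab.ne hp ha hb
  have hq : 0 < q.eval a * q.eval b := by
    refine lt_of_not_ge fun hle => ?_
    obtain ⟨c, hc, hc0⟩ := h.exists_root_of_mul_neg (hle.lt_of_ne (mul_ne_zero hqa hqb))
    exact hno c (uIoo_of_lt hab ▸ hc) (by rw [eval_mul, hc0, mul_zero])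
  -- `p' = (X - a) ^ m * (X - b) ^ n * s`, and `s` changes sign between `a` and `b`
  set s : R[X] := (m + 1 : R[X]) * (X - C b) * q + (n + 1 : R[X]) * (X - C a) * q
    + (X - C a) * (X - C b) * derivative q with hs
  have hd : derivative ((X - C a) ^ (m + 1) * (X - C b) ^ (n + 1) * q) =
      (X - C a) ^ m * (X - C b) ^ n * s := by
    simp only [hs, derivative_mul, derivative_X_sub_C_pow, add_tsub_cancel_right,
      Nat.cast_add, Nat.cast_one, map_add, map_natCast, map_one]
    ring
  have hsab : s.eval a * s.eval b < 0 := by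
    have hsa : s.eval a = (m + 1) * (a - b) * q.eval a := by simp [hs]
    have hsb : s.eval b = (n + 1) * (b - a) * q.eval b := by simp [hs]
    have : 0 < b - a := sub_pos.mpr hab
    have : 0 < ((m : R) + 1) * (n + 1) * (b - a) ^ 2 * (q.eval a * q.eval b) := by positivity
    rw [hsa, hsb]
    linarith
  obtain ⟨c, hc, hc0⟩ := h.exists_root_of_mul_neg hsab
  exact ⟨c, uIoo_of_lt hab ▸ hc, by rw [hd, eval_mul, hc0, mul_zero]⟩

theorem exists_derivative_root (h : PolyIVT R) (hab : a < b) (ha : p.eval a = 0)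
    (hb : p.eval b = 0) : ∃ c ∈ Ioo a b, (derivative p).eval c = 0 := by
  classical
  obtain rfl | hp := eq_or_ne p 0
  · obtain ⟨c, hc⟩ := exists_between hab
    exact ⟨c, hc, by simp⟩
  obtain ⟨b', hb', hmin⟩ := (p.roots.toFinset.filter (a < ·)).exists_min_image id
    ⟨b, by simp [hp, hb, hab]⟩
  simp only [Finset.mem_filter, Multiset.mem_toFinset, mem_roots hp, IsRoot.def] at hb' hmin
  obtain ⟨c, hc, hc0⟩ := h.exists_derivative_root_of_consecutive hb'.2 hp ha hb'.1
    fun c hc hc0 => (hmin c ⟨hc0, hc.1⟩).not_gt hc.2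
  exact ⟨c, ⟨hc.1, hc.2.trans_le (hmin b ⟨hb, hab⟩)⟩, hc0⟩

theorem strictMonoOn_of_derivative_pos (h : PolyIVT R)
    (hd : ∀ c ∈ Ioo a b, 0 < (derivative p).eval c) : StrictMonoOn (p.eval ·) (Icc a b) := by
  intro x hx y hy hxy
  by_contra! hle
  have hyx : 0 < y - x := sub_pos.mpr hxy
  set s := (p.eval y - p.eval x) / (y - x) with hs
  have hs0 : s ≤ 0 := div_nonpos_of_nonpos_of_nonneg (sub_nonpos.mpr hle) hyx.le
  obtain ⟨c, hc, hc0⟩ := h.exists_derivative_root (p := p - C (p.eval x) - C s * (X - C x)) hxy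
    (by simp) (by simp [hs, hyx.ne'])
  have hpos := hd c ⟨hx.1.trans_lt hc.1, hc.2.trans_le hy.2⟩
  have heq : (derivative p).eval c = s := by simpa [sub_eq_zero] using hc0
  exact hs0.not_gt (heq ▸ hpos)

theorem eval_pos_of_derivative_pos (h : PolyIVT R)
    (hd : ∀ c ∈ Ioo a b, 0 < (derivative p).eval c) (ha : 0 ≤ p.eval a) {x : R}
    (hx : x ∈ Ioo a b) : 0 < p.eval x :=
  ha.trans_lt <| h.strictMonoOn_of_derivative_pos hd (left_mem_Icc.mpr (hx.1.trans hx.2).le)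
    (Ioo_subset_Icc_self hx) hx.1

theorem eval_pos_of_derivative_neg (h : PolyIVT R)
    (hd : ∀ c ∈ Ioo a b, (derivative p).eval c < 0) (hb : 0 ≤ p.eval b) {x : R}
    (hx : x ∈ Ioo a b) : 0 < p.eval x := by
  have hmono := h.strictMonoOn_of_derivative_pos (p := -p) (by simpa using hd)
  refine hb.trans_lt (neg_lt_neg_iff.mp ?_)
  simpa using hmono (Ioo_subset_Icc_self hx) (right_mem_Icc.mpr (hx.1.trans hx.2).le) hx.2

end PolyIVT

end IntermediateValue

section SignTransfer

open Polynomial Set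

theorem exists_gap {M T : Type*} [LinearOrder T] (j : M → T) (S : Finset M) {α : T}
    (hα : ∀ m ∈ S, j m ≠ α) {a b : M} (ha : j a < α) (hb : α < j b) :
    ∃ a' b', j a ≤ j a' ∧ j a' < α ∧ α < j b' ∧ j b' ≤ j b ∧
      ∀ m ∈ S, j m ∉ Ioo (j a') (j b') := by
  classical
  obtain ⟨a', ha', hmax⟩ := (insert a (S.filter (j · < α))).exists_max_image j
    (Finset.insert_nonempty _ _)
  obtain ⟨b', hb', hmin⟩ := (insert b (S.filter (α < j ·))).exists_min_image j
    (Finset.insert_nonempty _ _)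
  simp only [Finset.mem_insert, Finset.mem_filter, forall_eq_or_imp] at ha' hmax hb' hmin
  refine ⟨a', b', hmax.1, ?_, ?_, hmin.1, fun m hm hmem => ?_⟩
  · rcases ha' with rfl | ha'
    exacts [ha, ha'.2]
  · rcases hb' with rfl | hb'
    exacts [hb, hb'.2]
  · rcases (hα m hm).lt_or_gt with hlt | hgt
    · exact (hmax.2 m ⟨hm, hlt⟩).not_gt hmem.1
    · exact (hmin.2 m ⟨hm, hgt⟩).not_gt hmem.2

variable {M L T : Type*} [CommRing M] [Field L] [Field T] [LinearOrder L] [LinearOrder T]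
  {i : M →+* L} {j : M →+* T}

/-- All roots in `L` of nonzero polynomials over `M` of degree less than `d` come from `M`. -/
def RootsInRange (i : M →+* L) (d : ℕ) : Prop :=
  ∀ h : M[X], h.natDegree < d → h.map i ≠ 0 → ∀ x : L, (h.map i).eval x = 0 → x ∈ i.range

namespace RootsInRange

variable {d : ℕ} {h : M[X]}

theorem exists_finset (hd : RootsInRange i d) (hdeg : h.natDegree < d) (hne : h.map i ≠ 0) :
    ∃ S : Finset M, ∀ x, (h.map i).eval x = 0 → ∃ m ∈ S, i m = x := by
  classical
  obtain ⟨S, -, hS⟩ := Finset.subset_set_image_iff (f := i) (s := univ)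
    (t := (h.map i).roots.toFinset).mp fun x hx => by
      simpa using hd h hdeg hne x (by simpa [hne] using hx)
  refine ⟨S, fun x hx => Finset.mem_image.mp ?_⟩
  rw [hS]
  simpa [hne] using hx

theorem exists_Ioo_no_root (hd : RootsInRange i d) (hdeg : h.natDegree < d) (hne : h.map i ≠ 0)
    {α : L} (hα : α ∉ i.range) {a b : M} (ha : i a < α) (hb : α < i b) :
    ∃ a' b' : M, i a' < α ∧ α < i b' ∧ ∀ x ∈ Ioo (i a') (i b'), (h.map i).eval x ≠ 0 := by
  obtain ⟨S, hS⟩ := hd.exists_finset hdeg hne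
  obtain ⟨a', b', -, ha', hb', -, hgap⟩ :=
    exists_gap i S (fun m _ hm => hα ⟨m, hm⟩) ha hb
  refine ⟨a', b', ha', hb', fun x hx hx0 => ?_⟩
  obtain ⟨m, hm, rfl⟩ := hS x hx0
  exact hgap m hm hx

end RootsInRange

/-- Two ring homomorphisms to ordered fields induce the same positivity relation. -/
def SamePos (i : M →+* L) (j : M →+* T) : Prop := ∀ m, 0 < i m ↔ 0 < j m

theorem SamePos.eval_pos_iff (hij : SamePos i j) (h : M[X]) (m : M) :
    0 < (h.map i).eval (i m) ↔ 0 < (h.map j).eval (j m) := by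
  rw [eval_map_apply, eval_map_apply, hij]

/-- The points `α` and `β` determine the same cut of `M`, in the orders induced from `L` and `T`. -/
def SameCut (i : M →+* L) (j : M →+* T) (α : L) (β : T) : Prop :=
  ∀ m, (i m < α → j m < β) ∧ (α < i m → β < j m)

variable [IsStrictOrderedRing L]

theorem map_derivative_ne_zero (hi : Function.Injective i) {h : M[X]}
    (hh : h.natDegree ≠ 0) : (derivative h).map i ≠ 0 := by
  rw [← derivative_map]
  intro h0
  have := derivative_eq_zero.mp h0
  rw [natDegree_map_eq_of_injective hi] at this
  exact hh this

/-- The elements of an ordered field bounded in absolute value by the image of a ring form a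
valuation ring; this encodes boundedness relative to a subring. -/
def boundedBy (i : M →+* L) : ValuationSubring L where
  carrier := {x | ∃ m, |x| ≤ i m}
  mul_mem' := fun ⟨m, hm⟩ ⟨n, hn⟩ => ⟨m * n, by
    rw [abs_mul, map_mul]
    exact mul_le_mul hm hn (abs_nonneg _) ((abs_nonneg _).trans hm)⟩
  one_mem' := ⟨1, by simp⟩
  add_mem' := fun ⟨m, hm⟩ ⟨n, hn⟩ => ⟨m + n, by
    rw [map_add]
    exact (abs_add_le _ _).trans (add_le_add hm hn)⟩
  zero_mem' := ⟨0, by simp⟩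
  neg_mem' := fun ⟨m, hm⟩ => ⟨m, by rwa [abs_neg]⟩
  mem_or_inv_mem' x := by
    rcases le_total |x| 1 with hx | hx
    · exact Or.inl ⟨1, by simpa using hx⟩
    · exact Or.inr ⟨1, by simpa [abs_inv] using inv_le_one_of_one_le₀ hx⟩

theorem exists_lt_and_lt_of_isIntegralElem {α : L} (hα : i.IsIntegralElem α) :
    ∃ a b : M, i a < α ∧ α < i b := by
  have hrange : ∀ m, i m ∈ boundedBy i := fun m => ⟨m ^ 2 + 1, by
    rw [map_add, map_pow, map_one, abs_le]
    constructor <;> nlinarith [sq_nonneg (i m - 1), sq_nonneg (i m + 1)]⟩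
  have hint : IsIntegral (boundedBy i) α := by
    obtain ⟨p, hp, hp0⟩ := hα
    refine ⟨p.map (i.codRestrict (boundedBy i) hrange), hp.map _, ?_⟩
    rw [eval₂_map]
    exact hp0
  obtain ⟨⟨α', m, hm⟩, rfl⟩ := IsIntegrallyClosed.isIntegral_iff.mp hint
  have hlt : |α'| < i (m + 1) := hm.trans_lt (by rw [map_add, map_one]; exact lt_add_one _)
  exact ⟨-(m + 1), m + 1, by rw [map_neg]; exact (abs_lt.mp hlt).1, (abs_lt.mp hlt).2⟩

namespace SamePos

variable [IsStrictOrderedRing T]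

theorem lt_iff (hij : SamePos i j) {a b : M} : i a < i b ↔ j a < j b := by
  simpa using hij (b - a)

theorem eq_zero_iff (hij : SamePos i j) {m : M} : i m = 0 ↔ j m = 0 := by
  have hpos := hij m
  have hneg := hij (-m)
  simp only [map_neg, neg_pos] at hneg
  rw [← not_iff_not, ← Ne, ← Ne, ← lt_or_lt_iff_ne, ← lt_or_lt_iff_ne, hpos, hneg]

theorem eval_neg_iff (hij : SamePos i j) (h : M[X]) (m : M) :
    (h.map i).eval (i m) < 0 ↔ (h.map j).eval (j m) < 0 := by
  simpa using hij.eval_pos_iff (-h) m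

theorem eval_nonneg_iff (hij : SamePos i j) (h : M[X]) (m : M) :
    0 ≤ (h.map i).eval (i m) ↔ 0 ≤ (h.map j).eval (j m) := by
  rw [← not_lt, ← not_lt, hij.eval_neg_iff]

theorem eval_pos_of_forall_mem_Ioo (hij : SamePos i j) (hi : Function.Injective i)
    (hL : PolyIVT L) (hT : PolyIVT T) {d : ℕ} (hd : RootsInRange i d) (h : M[X])
    (hdeg : h.natDegree < d) {a b : M} (hpos : ∀ x ∈ Ioo (i a) (i b), 0 < (h.map i).eval x)
    {y : T} (hy : y ∈ Ioo (j a) (j b)) : 0 < (h.map j).eval y := by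
  induction hn : h.natDegree using Nat.strong_induction_on generalizing h a b y with
  | _ n ih =>
  subst hn
  obtain hn0 | hn0 := eq_or_ne h.natDegree 0
  · obtain ⟨x, hx⟩ := exists_between (hij.lt_iff.mpr (hy.1.trans hy.2))
    have := hpos x hx
    rw [eq_C_of_natDegree_eq_zero hn0, map_C, eval_C] at this ⊢
    exact (hij _).mp this
  have hder : (derivative h).natDegree < h.natDegree := natDegree_derivative_lt hn0
  obtain ⟨S, hS⟩ := hd.exists_finset (hder.trans hdeg) (map_derivative_ne_zero hi hn0)
  by_cases hyS : ∃ m ∈ S, j m = y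
  · obtain ⟨m, -, rfl⟩ := hyS
    exact (hij.eval_pos_iff h m).mp (hpos _ ⟨hij.lt_iff.mpr hy.1, hij.lt_iff.mpr hy.2⟩)
  push Not at hyS
  obtain ⟨a', b', haa', ha', hb', hbb', hgap⟩ := exists_gap j S hyS hy.1 hy.2
  have hsub : Ioo (i a') (i b') ⊆ Ioo (i a) (i b) := Ioo_subset_Ioo
    (le_of_not_gt (hij.lt_iff.not.mpr haa'.not_gt)) (le_of_not_gt (hij.lt_iff.not.mpr hbb'.not_gt))
  have hnonneg : ∀ x ∈ Icc (i a') (i b'), 0 ≤ (h.map i).eval x := fun x hx =>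
    hL.eval_nonneg_of_forall_mem_Ioo (fun c hc => hpos c (hsub hc))
      (hij.lt_iff.mpr (ha'.trans hb')) hx
  have hle : i a' ≤ i b' := (hij.lt_iff.mpr (ha'.trans hb')).le
  have hno : ∀ x ∈ Ioo (i a') (i b'), ((derivative h).map i).eval x ≠ 0 := by
    intro x hx hx0
    obtain ⟨m, hm, rfl⟩ := hS x hx0
    exact hgap m hm ⟨hij.lt_iff.mp hx.1, hij.lt_iff.mp hx.2⟩
  rcases hL.forall_pos_or_forall_neg ordConnected_Ioo hno with hs | hs
  · refine hT.eval_pos_of_derivative_pos (fun c hc => ?_)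
      ((hij.eval_nonneg_iff h a').mp (hnonneg _ (left_mem_Icc.mpr hle))) ⟨ha', hb'⟩
    rw [derivative_map]
    exact ih _ hder _ (hder.trans hdeg) hs hc rfl
  · refine hT.eval_pos_of_derivative_neg (fun c hc => ?_)
      ((hij.eval_nonneg_iff h b').mp (hnonneg _ (right_mem_Icc.mpr hle))) ⟨ha', hb'⟩
    rw [derivative_map]
    simpa using ih _ hder (-derivative h) (by rw [natDegree_neg]; exact hder.trans hdeg)
      (fun x hx => by simpa using hs x hx) hc (natDegree_neg _)

theorem exists_root_sameCut_of_derivative_pos (hij : SamePos i j) (hi : Function.Injective i)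
    (hL : PolyIVT L) (hT : PolyIVT T) {d : ℕ} (hd : RootsInRange i d) {g : M[X]}
    (hder : (derivative g).natDegree < d) {α : L} (hg : (g.map i).eval α = 0) {a b : M}
    (ha : i a < α) (hb : α < i b)
    (hpos : ∀ x ∈ Ioo (i a) (i b), 0 < ((derivative g).map i).eval x) :
    ∃ β : T, (g.map j).eval β = 0 ∧ SameCut i j α β := by
  have hmonoL : StrictMonoOn ((g.map i).eval ·) (Icc (i a) (i b)) :=
    hL.strictMonoOn_of_derivative_pos (by simpa only [derivative_map] using hpos)
  have hmonoT : StrictMonoOn ((g.map j).eval ·) (Icc (j a) (j b)) :=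
    hT.strictMonoOn_of_derivative_pos fun c hc => by
      rw [derivative_map]
      exact hij.eval_pos_of_forall_mem_Ioo hi hL hT hd _ hder hpos hc
  have hαI : α ∈ Icc (i a) (i b) := ⟨ha.le, hb.le⟩
  have hlt : ∀ m, i m ∈ Icc (i a) (i b) → i m < α → (g.map j).eval (j m) < 0 := fun m hm h =>
    (hij.eval_neg_iff g m).mp (hg ▸ hmonoL hm hαI h)
  have hgt : ∀ m, i m ∈ Icc (i a) (i b) → α < i m → 0 < (g.map j).eval (j m) := fun m hm h =>
    (hij.eval_pos_iff g m).mp (hg ▸ hmonoL hαI hm h)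
  obtain ⟨β, hβI, hβ⟩ := hT _ _ _ (hij.lt_iff.mp (ha.trans hb))
    (hlt a (left_mem_Icc.mpr (ha.trans hb).le) ha) (hgt b (right_mem_Icc.mpr (ha.trans hb).le) hb)
  refine ⟨β, hβ, fun m => ⟨fun hm => ?_, fun hm => ?_⟩⟩
  · rcases le_or_gt (j m) (j a) with hma | hma
    · exact hma.trans_lt hβI.1
    have hmI : i m ∈ Icc (i a) (i b) := ⟨(hij.lt_iff.mpr hma).le, (hm.trans hb).le⟩
    refine (hmonoT.lt_iff_lt ⟨hma.le, (hij.lt_iff.mp (hm.trans hb)).le⟩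
      (Ioo_subset_Icc_self hβI)).mp ?_
    exact (hlt m hmI hm).trans_eq hβ.symm
  · rcases le_or_gt (j b) (j m) with hmb | hmb
    · exact hβI.2.trans_le hmb
    have hmI : i m ∈ Icc (i a) (i b) := ⟨(ha.trans hm).le, (hij.lt_iff.mpr hmb).le⟩
    refine (hmonoT.lt_iff_lt (Ioo_subset_Icc_self hβI)
      ⟨(hij.lt_iff.mp (ha.trans hm)).le, hmb.le⟩).mp ?_
    exact hβ.trans_lt (hgt m hmI hm)

theorem exists_root_sameCut (hij : SamePos i j) (hi : Function.Injective i) (hL : PolyIVT L)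
    (hT : PolyIVT T) {g : M[X]} (hd : RootsInRange i g.natDegree) (hgm : g.Monic) {α : L}
    (hα : α ∉ i.range) (hg : (g.map i).eval α = 0) :
    ∃ β : T, (g.map j).eval β = 0 ∧ SameCut i j α β := by
  have hg0 : g.natDegree ≠ 0 := by
    intro h0
    simp [hgm.natDegree_eq_zero.mp h0] at hg
  have hder := natDegree_derivative_lt hg0
  have hαint : i.IsIntegralElem α := ⟨g, hgm, by rwa [← eval_map]⟩
  obtain ⟨a₀, b₀, ha₀, hb₀⟩ := exists_lt_and_lt_of_isIntegralElem hαint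
  obtain ⟨a, b, ha, hb, hno⟩ :=
    hd.exists_Ioo_no_root hder (map_derivative_ne_zero hi hg0) hα ha₀ hb₀
  rcases hL.forall_pos_or_forall_neg ordConnected_Ioo hno with hs | hs
  · exact hij.exists_root_sameCut_of_derivative_pos hi hL hT hd hder hg ha hb hs
  · simpa using hij.exists_root_sameCut_of_derivative_pos hi hL hT hd (g := -g)
      (by rwa [derivative_neg, natDegree_neg]) (by simpa using hg) ha hb
      (fun x hx => by simpa using hs x hx)

theorem eval_pos_of_sameCut (hij : SamePos i j) (hi : Function.Injective i) (hL : PolyIVT L)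
    (hT : PolyIVT T) {d : ℕ} (hd : RootsInRange i d) {α : L} {β : T} (hcut : SameCut i j α β)
    (hα : i.IsIntegralElem α) (hαr : α ∉ i.range) {h : M[X]} (hdeg : h.natDegree < d)
    (hpos : 0 < (h.map i).eval α) : 0 < (h.map j).eval β := by
  have hne : h.map i ≠ 0 := by
    intro h0
    simp [h0] at hpos
  obtain ⟨a₀, b₀, ha₀, hb₀⟩ := exists_lt_and_lt_of_isIntegralElem hα
  obtain ⟨a, b, ha, hb, hno⟩ := hd.exists_Ioo_no_root hdeg hne hαr ha₀ hb₀
  rcases hL.forall_pos_or_forall_neg ordConnected_Ioo hno with hs | hs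
  · exact hij.eval_pos_of_forall_mem_Ioo hi hL hT hd h hdeg hs
      ⟨(hcut a).1 ha, (hcut b).2 hb⟩
  · exact absurd hpos (hs α ⟨ha, hb⟩).not_gt

theorem exists_root_same_sign (hij : SamePos i j) (hi : Function.Injective i) (hL : PolyIVT L)
    (hT : PolyIVT T) {g : M[X]} (hd : RootsInRange i g.natDegree) (hgm : g.Monic) {α : L}
    (hα : α ∉ i.range) (hg : (g.map i).eval α = 0) :
    ∃ β : T, ∀ h : M[X], 0 < (h.map i).eval α ↔ 0 < (h.map j).eval β := by
  obtain ⟨β, hβ, hcut⟩ := hij.exists_root_sameCut hi hL hT hd hgm hα hg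
  refine ⟨β, fun h => ?_⟩
  have hmod : (h %ₘ g).natDegree < g.natDegree :=
    natDegree_modByMonic_lt h hgm (by rintro rfl; simp at hg)
  have hmodα : (h.map i).eval α = ((h %ₘ g).map i).eval α := by
    conv_lhs => rw [← modByMonic_add_div h g]
    simp [hg]
  have hmodβ : (h.map j).eval β = ((h %ₘ g).map j).eval β := by
    conv_lhs => rw [← modByMonic_add_div h g]
    simp [hβ]
  have hpos : ∀ {r : M[X]}, r.natDegree < g.natDegree →
      0 < (r.map i).eval α → 0 < (r.map j).eval β :=
    fun hr => hij.eval_pos_of_sameCut hi hL hT hd hcut ⟨g, hgm, by rwa [← eval_map]⟩ hα hr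
  rw [hmodα, hmodβ]
  refine ⟨hpos hmod, fun hβpos => ?_⟩
  by_contra! hle
  rcases hle.lt_or_eq with hlt | heq
  · have := hpos (r := -(h %ₘ g)) (by rwa [natDegree_neg]) (by simpa using hlt)
    exact hβpos.not_gt (by simpa using this)
  · have hmod0 : (h %ₘ g).map i = 0 := by
      by_contra hne
      exact hα (hd _ hmod hne _ heq)
    simp [(Polynomial.map_eq_zero_iff hi).mp hmod0] at hβpos

end SamePos

end SignTransfer

section MaximalSubring

open Polynomial Set

variable {L T : Type*} [Field L] [Field T]

/-- The first projection of a subring of a product of two fields. -/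
def projLeft (G : Subring (L × T)) : G →+* L := (RingHom.fst L T).comp G.subtype

/-- The second projection of a subring of a product of two fields. -/
def projRight (G : Subring (L × T)) : G →+* T := (RingHom.snd L T).comp G.subtype

variable [LinearOrder L] [LinearOrder T]

/-- The subrings of `L × T` that are graphs of order isomorphisms between subrings of `L` and of
`T`: an element has positive first coordinate exactly when its second coordinate is positive. -/
def IsOrderGraph (G : Subring (L × T)) : Prop := SamePos (projLeft G) (projRight G)

namespace IsOrderGraph

variable {G : Subring (L × T)}

theorem exists_maximal (hG : IsOrderGraph G) : ∃ H, G ≤ H ∧ Maximal IsOrderGraph H := by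
  refine zorn_le_nonempty₀ {H : Subring (L × T) | IsOrderGraph H} (fun c hc hchain H hH => ?_) G hG
  refine ⟨sSup c, ?_, fun _ => le_sSup⟩
  rintro ⟨z, hz⟩
  obtain ⟨K, hK, hzK⟩ := (Subring.mem_sSup_of_directedOn ⟨H, hH⟩ hchain.directedOn).mp hz
  exact hc hK ⟨z, hzK⟩

theorem mem_of_maximal (hG : Maximal IsOrderGraph G) {α : L} {β : T}
    (h : ∀ p : G[X], 0 < (p.map (projLeft G)).eval α ↔ 0 < (p.map (projRight G)).eval β) :
    (α, β) ∈ G := by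
  let e : G[X] →+* L × T := eval₂RingHom G.subtype (α, β)
  have hle : G ≤ e.range := fun z hz => ⟨C ⟨z, hz⟩, by simp [e]⟩
  have hgraph : IsOrderGraph e.range := by
    rintro ⟨_, p, rfl⟩
    have hp := h p
    rw [eval_map, eval_map] at hp
    have hfst : (e p).1 = p.eval₂ (projLeft G) α := hom_eval₂ p G.subtype (RingHom.fst L T) (α, β)
    have hsnd : (e p).2 = p.eval₂ (projRight G) β := hom_eval₂ p G.subtype (RingHom.snd L T) (α, β)
    rwa [← hfst, ← hsnd] at hp
  exact hG.2 hgraph hle ⟨X, by simp [e]⟩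

variable [IsStrictOrderedRing L] [IsStrictOrderedRing T]

theorem projLeft_injective (hG : IsOrderGraph G) : Function.Injective (projLeft G) :=
  (injective_iff_map_eq_zero _).mpr fun _ hz =>
    Subtype.ext (Prod.ext hz (hG.eq_zero_iff.mp hz))

end IsOrderGraph

theorem eval_inv_pos_iff {M : Type*} [CommRing M] [IsStrictOrderedRing L] (i : M →+* L) {z : M}
    (hz : i z ≠ 0) (p : M[X]) :
    0 < (p.map i).eval (i z)⁻¹ ↔ 0 < i (p.reverse.eval z * z ^ p.natDegree) := by
  let _ : Invertible (i z)⁻¹ := invertibleOfNonzero (inv_ne_zero hz)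
  have hrev := eval₂_reverse_mul_pow i (i z)⁻¹ p
  rw [invOf_eq_inv, inv_inv, ← eval_map, ← eval_map, eval_map_apply] at hrev
  rw [← hrev, map_mul, map_pow, inv_pow, ← div_eq_mul_inv, div_pos_iff, mul_pos_iff]

namespace IsOrderGraph

variable [IsStrictOrderedRing L] [IsStrictOrderedRing T] {G : Subring (L × T)}

theorem isField_of_maximal (hG : Maximal IsOrderGraph G) : IsField G where
  exists_pair_ne := exists_pair_ne G
  mul_comm := mul_comm
  mul_inv_cancel {z} hz := by
    have hl : projLeft G z ≠ 0 := (map_ne_zero_iff _ hG.1.projLeft_injective).mpr hz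
    have hr : projRight G z ≠ 0 := hG.1.eq_zero_iff.not.mp hl
    exact ⟨⟨((projLeft G z)⁻¹, (projRight G z)⁻¹), mem_of_maximal hG fun p => by
      rw [eval_inv_pos_iff _ hl, eval_inv_pos_iff _ hr, hG.1]⟩,
      Subtype.ext (Prod.ext (mul_inv_cancel₀ hl) (mul_inv_cancel₀ hr))⟩

theorem rootsInRange_of_maximal (hG : Maximal IsOrderGraph G) (hL : PolyIVT L) (hT : PolyIVT T)
    (d : ℕ) : RootsInRange (projLeft G) d := by
  have hi := hG.1.projLeft_injective
  let _ := (isField_of_maximal hG).toField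
  induction d with
  | zero => exact fun h hdeg => absurd hdeg h.natDegree.not_lt_zero
  | succ d ih =>
    intro h hdeg hne α hα
    rcases (Nat.lt_succ_iff.mp hdeg).lt_or_eq with hlt | rfl
    · exact ih h hlt hne α hα
    by_contra hr
    have hh0 : h ≠ 0 := by rintro rfl; simp at hne
    have hlead : h.leadingCoeff⁻¹ ≠ 0 := inv_ne_zero (leadingCoeff_ne_zero.mpr hh0)
    obtain ⟨β, hβ⟩ := hG.1.exists_root_same_sign hi hL hT
      (by rwa [natDegree_mul_C hlead]) (monic_mul_leadingCoeff_inv hh0) hr (by simp [hα])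
    exact hr ⟨⟨_, mem_of_maximal hG hβ⟩, rfl⟩

end IsOrderGraph

theorem exists_forall_notMem_uIcc {M : Type*} [Field M] [IsStrictOrderedRing L] (i : M →+* L)
    (S : Finset M) {x : L} (hx : x ∉ i.range) : ∃ c : M, ∀ m ∈ S, i m ∉ uIcc x (i c) := by
  classical
  let _ : LinearOrder M := LinearOrder.lift' i i.injective
  have : IsStrictOrderedRing M := Function.Injective.isStrictOrderedRing i (map_zero i) (map_one i)
    (map_add i) (map_mul i) Iff.rfl Iff.rfl
  obtain ⟨c, hlo, hhi⟩ := Order.exists_between_finsets (S.filter (i · < x)) (S.filter (x < i ·))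
    fun a ha b hb => (Finset.mem_filter.mp ha).2.trans (Finset.mem_filter.mp hb).2
  refine ⟨c, fun m hm hmem => ?_⟩
  rcases lt_trichotomy (i m) x with hlt | rfl | hlt
  · exact hmem.1.not_gt (lt_min hlt (hlo m (Finset.mem_filter.mpr ⟨hm, hlt⟩)))
  · exact hx ⟨m, rfl⟩
  · exact hmem.2.not_gt (max_lt hlt (hhi m (Finset.mem_filter.mpr ⟨hm, hlt⟩)))

theorem RootsInRange.exists_eval_pos_iff {M : Type*} [Field M] [IsStrictOrderedRing L]
    {i : M →+* L} (hi : ∀ d, RootsInRange i d) (hL : PolyIVT L) (P : Finset M[X]) (x : L) :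
    ∃ c : M, ∀ p ∈ P, 0 < (p.map i).eval x ↔ 0 < (p.map i).eval (i c) := by
  classical
  by_cases hx : x ∈ i.range
  · obtain ⟨c, rfl⟩ := hx
    exact ⟨c, fun _ _ => Iff.rfl⟩
  have hprod : (∏ p ∈ P.erase 0, p).map i ≠ 0 := by
    simp [Polynomial.map_prod, Finset.prod_eq_zero_iff, Polynomial.map_eq_zero_iff i.injective]
  obtain ⟨S, hS⟩ := (hi _).exists_finset (Nat.lt_succ_self _) hprod
  obtain ⟨c, hc⟩ := exists_forall_notMem_uIcc i S hx
  refine ⟨c, fun p hp => ?_⟩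
  by_cases hp0 : p = 0
  · simp [hp0]
  refine hL.eval_pos_iff_of_no_root fun y hy hy0 => ?_
  obtain ⟨m, hm, rfl⟩ := hS y (by
    rw [Polynomial.map_prod, eval_prod]
    exact Finset.prod_eq_zero (Finset.mem_erase.mpr ⟨hp0, hp⟩) hy0)
  exact hc m hm hy

theorem SamePos.exists_eval_pos_iff {A : Type*} [CommRing A] [IsStrictOrderedRing L]
    [IsStrictOrderedRing T] {φ : A →+* L} {ψ : A →+* T} (hφψ : SamePos φ ψ) (hL : PolyIVT L)
    (hT : PolyIVT T) (P : Finset A[X]) (x : L) :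
    ∃ y : T, ∀ p ∈ P, 0 < (p.map φ).eval x ↔ 0 < (p.map ψ).eval y := by
  classical
  have hrange : IsOrderGraph (φ.prod ψ).range := by
    rintro ⟨_, a, rfl⟩
    exact hφψ a
  obtain ⟨G, hle, hG⟩ := hrange.exists_maximal
  let _ := (IsOrderGraph.isField_of_maximal hG).toField
  let θ : A →+* G := (φ.prod ψ).codRestrict G fun a => hle ⟨a, rfl⟩
  obtain ⟨c, hc⟩ := RootsInRange.exists_eval_pos_iff
    (IsOrderGraph.rootsInRange_of_maximal hG hL hT) hL (P.image (map θ)) x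
  refine ⟨projRight G c, fun p hp => ?_⟩
  have hφ : p.map φ = (p.map θ).map (projLeft G) :=
    (Polynomial.map_map θ (projLeft G) p).symm
  have hψ : p.map ψ = (p.map θ).map (projRight G) :=
    (Polynomial.map_map θ (projRight G) p).symm
  rw [hφ, hψ, hc _ (Finset.mem_image_of_mem _ hp), hG.1.eval_pos_iff]

end MaximalSubring

section Germ

open Filter Polynomial Set

variable {ι : Type*} {U : Ultrafilter ι}

theorem eval_map_coeRingHom (p : (ι → ℝ)[X]) (a : ι → ℝ) :
    (p.map (Germ.coeRingHom (U : Filter ι))).eval (a : Germ (U : Filter ι) ℝ) =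
      ((fun k => (p.map (Pi.evalRingHom _ k)).eval (a k) : ι → ℝ) : Germ (U : Filter ι) ℝ) := by
  refine (eval_map_apply (Germ.coeRingHom (U : Filter ι)) a).trans ?_
  exact congrArg _ (funext fun k => (eval_map_apply (Pi.evalRingHom (fun _ => ℝ) k) a).symm)

theorem polyIVT_germ : PolyIVT (Germ (U : Filter ι) ℝ) := by
  intro p a b hab ha hb
  obtain ⟨P, rfl⟩ := Polynomial.map_surjective (Germ.coeRingHom (U : Filter ι))
    (fun g => ⟨_, g.out_eq'⟩) p
  induction a using Germ.inductionOn with | _ a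
  induction b using Germ.inductionOn with | _ b
  simp only [eval_map_coeRingHom] at ha hb ⊢
  have hroot : ∀ᶠ k in (U : Filter ι), ∃ c ∈ Ioo (a k) (b k),
      (P.map (Pi.evalRingHom _ k)).eval c = 0 := by
    filter_upwards [Germ.coe_lt.mp hab, Germ.coe_lt.mp ha, Germ.coe_pos.mp hb] with k h₁ h₂ h₃
      using polyIVT_real _ _ _ h₁ h₂ h₃
  obtain ⟨c, hc⟩ := hroot.choice
  refine ⟨c, ⟨Germ.coe_lt.mpr (hc.mono fun _ h => h.1.1),
    Germ.coe_lt.mpr (hc.mono fun _ h => h.1.2)⟩, ?_⟩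
  rw [eval_map_coeRingHom]
  exact Germ.coe_eq.mpr (hc.mono fun _ h => h.2)

end Germ

section ArtinLang

open Filter Polynomial

/-- A ring homomorphism to an ordered field is sign approximable if every finite system of strict
inequalities and negations of such that it satisfies is also satisfied by a real point. -/
def SignApproximable {A L : Type*} [CommRing A] [Field L] [LinearOrder L] (φ : A →+* L) : Prop :=
  ∀ P : Finset A, ∃ e : A →+* ℝ, ∀ p ∈ P, 0 < φ p ↔ 0 < e p

variable {A B L : Type*} [CommRing A] [CommRing B] [Field L] [LinearOrder L]

namespace SignApproximable

variable {φ : A →+* L}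

theorem comp (hφ : SignApproximable φ) (f : B →+* A) : SignApproximable (φ.comp f) := by
  classical
  intro P
  obtain ⟨e, he⟩ := hφ (P.image f)
  exact ⟨e.comp f, fun p hp => he _ (Finset.mem_image_of_mem f hp)⟩

theorem exists_samePos_germ (hφ : SignApproximable φ) :
    ∃ U : Ultrafilter (A →+* ℝ),
      SamePos φ ((Germ.coeRingHom (U : Filter (A →+* ℝ))).comp (RingHom.pi fun e => e)) := by
  classical
  let S : A → Set (A →+* ℝ) := fun p => {e | 0 < φ p ↔ 0 < e p}
  obtain ⟨U, hU⟩ := Ultrafilter.exists_ultrafilter_of_finite_inter_nonempty (Set.range S)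
    fun Q hQ => by
      obtain ⟨P, -, rfl⟩ := Finset.subset_set_image_iff.mp (Set.image_univ.symm ▸ hQ)
      obtain ⟨e, he⟩ := hφ P
      exact ⟨e, by simpa [S] using he⟩
  refine ⟨U, fun p => ?_⟩
  have hp : ∀ᶠ e in (U : Filter (A →+* ℝ)), 0 < φ p ↔ 0 < e p := hU ⟨p, rfl⟩
  refine Iff.trans ?_ (Germ.coe_pos (φ := (U : Ultrafilter (A →+* ℝ))) (f := fun e => e p)).symm
  exact (eventually_const.symm.trans (eventually_congr hp))

theorem polynomial [IsStrictOrderedRing L] (hL : PolyIVT L) {φ : A[X] →+* L}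
    (hφ : SignApproximable (φ.comp C)) : SignApproximable φ := by
  intro P
  obtain ⟨U, hU⟩ := hφ.exists_samePos_germ
  obtain ⟨y, hy⟩ := hU.exists_eval_pos_iff hL polyIVT_germ P (φ X)
  induction y using Germ.inductionOn with | _ y
  have hev : ∀ p ∈ P, ∀ᶠ e in (U : Filter (A →+* ℝ)), 0 < φ p ↔ 0 < p.eval₂ e (y e) := by
    intro p hp
    have hφp : (p.map (φ.comp C)).eval (φ X) = φ p := by
      rw [eval_map, ← hom_eval₂, eval₂_C_X]
    have hpos := hy p hp
    rw [hφp, ← Polynomial.map_map, eval_map_coeRingHom, Germ.coe_pos] at hpos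
    by_cases h0 : 0 < φ p
    · filter_upwards [hpos.mp h0] with e he
      rw [Polynomial.map_map, eval_map] at he
      exact iff_of_true h0 he
    · filter_upwards [Ultrafilter.eventually_not.mpr (mt hpos.mpr h0)] with e he
      rw [Polynomial.map_map, eval_map] at he
      exact iff_of_false h0 he
  obtain ⟨e, he⟩ := ((eventually_all_finset P).mpr hev).exists
  exact ⟨eval₂RingHom e (y e), he⟩

end SignApproximable

variable [IsStrictOrderedRing L]

theorem signApproximable_real (φ : ℝ →+* L) : SignApproximable φ := by
  have hnonneg : ∀ c : ℝ, 0 ≤ c → 0 ≤ φ c := fun c hc => by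
    rw [← Real.mul_self_sqrt hc, map_mul]
    exact mul_self_nonneg _
  refine fun _ => ⟨RingHom.id ℝ, fun c _ => ⟨fun h => lt_of_not_ge fun hc => ?_, fun hc => ?_⟩⟩
  · exact h.not_ge (by simpa using hnonneg (-c) (neg_nonneg.mpr hc))
  · exact (hnonneg c hc.le).lt_of_ne' ((map_ne_zero φ).mpr hc.ne')

theorem signApproximable_mvPolynomial (hL : PolyIVT L) {n : ℕ}
    (φ : MvPolynomial (Fin n) ℝ →+* L) : SignApproximable φ := by
  induction n with
  | zero =>
    let e := (MvPolynomial.isEmptyAlgEquiv ℝ (Fin 0)).toRingEquiv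
    simpa [RingHom.comp_assoc] using
      (signApproximable_real (φ.comp e.symm.toRingHom)).comp e.toRingHom
  | succ n ih =>
    let e := (MvPolynomial.finSuccEquiv ℝ n).toRingEquiv
    simpa [RingHom.comp_assoc] using
      (SignApproximable.polynomial hL (ih ((φ.comp e.symm.toRingHom).comp C))).comp e.toRingHom

theorem exists_eval_pos_iff_of_ringHom (hL : PolyIVT L) {n : ℕ}
    (φ : MvPolynomial (Fin n) ℝ →+* L) (p : MvPolynomial (Fin n) ℝ) :
    ∃ x : Fin n → ℝ, 0 < φ p ↔ 0 < MvPolynomial.eval x p := by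
  obtain ⟨e, he⟩ := signApproximable_mvPolynomial hL φ {p}
  have heval : e = MvPolynomial.eval fun k => e (MvPolynomial.X k) :=
    MvPolynomial.ringHom_ext (fun r => by
      rw [MvPolynomial.eval_C]
      exact RingHom.congr_fun (Subsingleton.elim (e.comp MvPolynomial.C) (RingHom.id ℝ)) r)
      fun k => by rw [MvPolynomial.eval_X]
  exact ⟨_, heval ▸ he p (Finset.mem_singleton_self p)⟩

end ArtinLang

section SumsOfSquares

theorem isSumSq_map_s19 {R S : Type*} [CommRing R] [CommRing S] (φ : R →+* S) {a : R}
    (h : IsSumSq a) : IsSumSq (φ a) := by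
  induction h with
  | zero => simp
  | sq_add b hs ih => simpa using ih.sq_add (φ b)

theorem exists_fin_sum_sq {R : Type*} [CommRing R] {a : R} (h : IsSumSq a) :
    ∃ (n : ℕ) (g : Fin n → R), ∑ i, g i ^ 2 = a := by
  induction h with
  | zero => exact ⟨0, 0, by simp⟩
  | sq_add b hs ih =>
    obtain ⟨n, g, rfl⟩ := ih
    exact ⟨n + 1, Fin.cons b g, by simp [Fin.sum_univ_succ, sq]⟩

theorem isSumSq_div {F : Type*} [Field F] {a b : F} (ha : IsSumSq a) (hb : IsSumSq b) :
    IsSumSq (a / b) := by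
  rcases eq_or_ne b 0 with rfl | h0
  · simp
  have hab : a / b = a * b * (b⁻¹ * b⁻¹) := by field_simp
  exact hab ▸ (ha.mul hb).mul (.mul_self _)

theorem isSemireal_of_not_isSumSq {F : Type*} [Field F] [CharZero F] {a : F}
    (ha : ¬ IsSumSq a) : IsSemireal F := by
  refine .of_not_isSumSq_neg_one fun h => ha ?_
  have hdiff : a = (a + 1) / 2 * ((a + 1) / 2) + -1 * ((a - 1) / 2 * ((a - 1) / 2)) := by ring
  exact hdiff ▸ (h.mul (.mul_self _)).sq_add _

theorem exists_linearOrder_of_isSumSq_or {F : Type*} [Field F] [IsSemireal F]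
    (h : ∀ a : F, IsSumSq a ∨ IsSumSq (-a)) : ∃ _ : LinearOrder F, IsStrictOrderedRing F := by
  classical
  let C : RingCone F := ⟨Subsemiring.sumSq F, fun {a} hpos hneg => by
    by_contra ha
    have hdiv := isSumSq_div (Subsemiring.mem_sumSq.mp hneg) (Subsemiring.mem_sumSq.mp hpos)
    rw [neg_div, div_self ha] at hdiv
    exact IsSemireal.not_isSumSq_neg_one F hdiv⟩
  have hC : HasMemOrNegMem C := ⟨fun a => by simpa [C] using h a⟩
  let o : LinearOrder F := LinearOrder.mkOfAddGroupCone C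
  have : IsOrderedRing F := IsOrderedRing.mkOfCone C
  exact ⟨o, IsOrderedRing.toIsStrictOrderedRing F⟩

end SumsOfSquares

section SignChange

open Polynomial

variable {F : Type*} [Field F]

theorem dvd_one_add_sum_sq_mod_iff (p : F[X]) {n : ℕ} (g : Fin n → F[X]) :
    p ∣ 1 + ∑ i, (g i % p) ^ 2 ↔ p ∣ 1 + ∑ i, g i ^ 2 := by
  have hmod : ∀ i, AdjoinRoot.mk p (g i % p) = AdjoinRoot.mk p (g i) := fun i =>
    AdjoinRoot.mk_eq_mk.mpr ⟨-(g i / p), by rw [EuclideanDomain.mod_eq_sub_mul_div]; ring⟩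
  simp only [← AdjoinRoot.mk_eq_zero, map_add, map_sum, map_pow, hmod]

variable [LinearOrder F] [IsStrictOrderedRing F] {a b : F}

theorem exists_irreducible_dvd_of_eval_mul_neg {q : F[X]} (h : q.eval a * q.eval b < 0) :
    ∃ p, Irreducible p ∧ p ∣ q ∧ p.eval a * p.eval b < 0 := by
  induction q using WfDvdMonoid.induction_on_irreducible with
  | zero => simp at h
  | unit q hq =>
    obtain ⟨c, -, rfl⟩ := isUnit_iff.mp hq
    simp only [eval_C] at h
    exact absurd h (mul_self_nonneg c).not_gt
  | mul q p _ hp ih =>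
    rw [eval_mul, eval_mul, mul_mul_mul_comm] at h
    rcases mul_neg_iff.mp h with ⟨-, hq⟩ | ⟨hpab, -⟩
    · obtain ⟨u, hu, hd, hs⟩ := ih hq
      exact ⟨u, hu, hd.mul_left _, hs⟩
    · exact ⟨p, hp, dvd_mul_right _ _, hpab⟩

-- If `p * q = 1 + ∑ rᵢ²` with `deg rᵢ < deg p`, then `q` has smaller degree than `p` and changes
-- sign wherever `p` does.
theorem not_dvd_one_add_sum_sq {p : F[X]} (hp : p.eval a * p.eval b < 0) {n : ℕ}
    (g : Fin n → F[X]) : ¬ p ∣ 1 + ∑ i, g i ^ 2 := by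
  induction hd : p.natDegree using Nat.strong_induction_on generalizing p g with
  | _ d ih =>
  subst hd
  have hp0 : p ≠ 0 := by rintro rfl; simp at hp
  have hdeg : p.natDegree ≠ 0 := fun h0 => by
    rw [eq_C_of_natDegree_eq_zero h0, eval_C, eval_C] at hp
    exact hp.not_ge (mul_self_nonneg _)
  intro hdvd
  obtain ⟨q, hq⟩ := (dvd_one_add_sum_sq_mod_iff p g).mpr hdvd
  have hpos : ∀ x, 0 < p.eval x * q.eval x := fun x => by
    rw [← eval_mul, ← hq]
    simp only [eval_add, eval_one, eval_finsetSum, eval_pow]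
    positivity
  have hqneg : q.eval a * q.eval b < 0 := by
    have := mul_pos (hpos a) (hpos b)
    rw [mul_mul_mul_comm] at this
    exact neg_of_mul_pos_right this hp.le
  refine ih q.natDegree ?_ hqneg _ rfl (Dvd.intro_left p hq.symm)
  have hq0 : q ≠ 0 := by rintro rfl; simp at hqneg
  have hle : (1 + ∑ i, (g i % p) ^ 2).natDegree ≤ 2 * (p.natDegree - 1) := by
    refine (natDegree_add_le _ _).trans (max_le (by simp) ?_)
    refine natDegree_sum_le_of_forall_le _ _ fun i _ => natDegree_pow_le.trans ?_
    have := natDegree_mod_lt (g i) hdeg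
    gcongr
    lia
  rw [hq, natDegree_mul hp0 hq0] at hle
  lia

end SignChange

section MaximalSemireal

open IntermediateField Polynomial

variable {F Ω : Type*} [Field F] [Field Ω] [Algebra F Ω]

theorem isSemireal_adjoin_simple {α : Ω} (hα : IsIntegral F α)
    (h : ∀ (n : ℕ) (g : Fin n → F[X]), aeval α (1 + ∑ i, g i ^ 2) ≠ 0) : IsSemireal F⟮α⟯ := by
  refine ⟨fun {s} hs hs0 => ?_⟩
  obtain ⟨n, y, rfl⟩ := exists_fin_sum_sq hs
  have hy : ∀ i, ∃ p : F[X], aeval α p = (y i : Ω) := fun i => by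
    have hmem : (y i : Ω) ∈ F⟮α⟯.toSubalgebra := (y i).2
    rwa [adjoin_simple_toSubalgebra_of_isAlgebraic hα.isAlgebraic,
      Algebra.adjoin_singleton_eq_range_aeval] at hmem
  choose g hg using hy
  refine h n g ?_
  simpa [hg] using congrArg (algebraMap F⟮α⟯ Ω) hs0

theorem isSemireal_adjoin_simple_of_sign_change [LinearOrder F] [IsStrictOrderedRing F] {α : Ω}
    {p : F[X]} (hp : Irreducible p) (hα : aeval α p = 0) {a b : F}
    (hab : p.eval a * p.eval b < 0) : IsSemireal F⟮α⟯ := by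
  have hint : IsIntegral F α := isAlgebraic_iff_isIntegral.mp ⟨p, hp.ne_zero, hα⟩
  refine isSemireal_adjoin_simple hint fun n g hg => not_dvd_one_add_sum_sq hab g ?_
  exact ((minpoly.irreducible hint).dvd_symm hp (minpoly.dvd F α hα)).trans (minpoly.dvd F α hg)

theorem eq_zero_of_map_add_map_mul_eq_zero {s : Ω} (hs : s ∉ (algebraMap F Ω).range) {u v : F}
    (h : algebraMap F Ω u + algebraMap F Ω v * s = 0) : u = 0 ∧ v = 0 := by
  have hv : v = 0 := by
    by_contra hv
    refine hs ⟨-u / v, ?_⟩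
    rw [map_div₀, map_neg, div_eq_iff (by simpa using hv)]
    linear_combination -h
  exact ⟨by simpa [hv] using h, hv⟩

theorem exists_aeval_eq_map_add_map_mul {s : Ω} {d : F} (hs : s ^ 2 = algebraMap F Ω d)
    (g : F[X]) : ∃ u v : F, aeval s g = algebraMap F Ω u + algebraMap F Ω v * s := by
  have hm : (X ^ 2 - C d : F[X]).Monic := monic_X_pow_sub_C d two_ne_zero
  have hdeg : (g %ₘ (X ^ 2 - C d)).natDegree < 2 := by
    refine (natDegree_modByMonic_lt g hm fun h1 => ?_).trans_eq (natDegree_X_pow_sub_C)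
    simpa [h1] using natDegree_X_pow_sub_C (n := 2) (r := d)
  obtain ⟨v, u, huv⟩ := exists_eq_X_add_C_of_natDegree_le_one (Nat.le_of_lt_succ hdeg)
  refine ⟨u, v, ?_⟩
  rw [← modByMonic_add_div g (X ^ 2 - C d), huv]
  simp [hs, add_comm]

theorem isSemireal_adjoin_simple_of_sq [IsSemireal F] {s : Ω} {d : F}
    (hs : s ^ 2 = algebraMap F Ω d) (hd : ¬ IsSumSq (-d)) : IsSemireal F⟮s⟯ := by
  have hint : IsIntegral F s := ⟨X ^ 2 - C d, monic_X_pow_sub_C d two_ne_zero, by simp [hs]⟩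
  refine isSemireal_adjoin_simple hint fun n g hg => ?_
  by_cases hmem : s ∈ (algebraMap F Ω).range
  · obtain ⟨c, rfl⟩ := hmem
    rw [aeval_algebraMap_apply, map_eq_zero] at hg
    exact IsSemireal.one_add_ne_zero (.sum_sq .univ fun i => (g i).eval c)
      (by simpa [eval_finsetSum] using hg)
  choose u v huv using fun i => exists_aeval_eq_map_add_map_mul hs (g i)
  obtain ⟨h0, -⟩ := eq_zero_of_map_add_map_mul_eq_zero hmem
    (u := 1 + ∑ i, u i ^ 2 + d * ∑ i, v i ^ 2) (v := 2 * ∑ i, u i * v i) <| by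
      rw [← hg]
      simp only [map_add, map_one, map_sum, map_pow, huv, map_mul, map_ofNat, Finset.mul_sum,
        Finset.sum_mul, add_assoc, ← Finset.sum_add_distrib]
      refine congrArg (1 + ·) (Finset.sum_congr rfl fun i _ => ?_)
      linear_combination -algebraMap F Ω (v i) ^ 2 * hs
  rcases eq_or_ne (∑ i, v i ^ 2) 0 with hv | hv
  · rw [hv, mul_zero, add_zero] at h0
    exact IsSemireal.one_add_ne_zero (.sum_sq _ _) h0
  · have hdiv : -d = (1 + ∑ i, u i ^ 2) / ∑ i, v i ^ 2 := by
      rw [eq_div_iff hv]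
      linear_combination -h0
    exact hd (hdiv ▸ isSumSq_div (IsSumSq.one.add (.sum_sq _ _)) (.sum_sq _ _))

/-- A subfield of `Ω` with no proper simple extension inside `Ω` that is formally real. -/
def MaximalSemireal (F Ω : Type*) [Field F] [Field Ω] [Algebra F Ω] : Prop :=
  ∀ α : Ω, IsSemireal F⟮α⟯ → α ∈ (algebraMap F Ω).range

namespace MaximalSemireal

variable [IsAlgClosed Ω]

theorem exists_linearOrder [IsSemireal F] (hmax : MaximalSemireal F Ω) :
    ∃ _ : LinearOrder F, IsStrictOrderedRing F := by
  refine exists_linearOrder_of_isSumSq_or fun a => or_iff_not_imp_right.mpr fun hneg => ?_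
  obtain ⟨s, hs⟩ := IsAlgClosed.exists_pow_nat_eq (algebraMap F Ω a) two_pos
  obtain ⟨c, rfl⟩ := hmax s (isSemireal_adjoin_simple_of_sq hs hneg)
  rw [← map_pow] at hs
  rw [← (algebraMap F Ω).injective hs, sq]
  exact .mul_self c

theorem polyIVT [LinearOrder F] [IsStrictOrderedRing F] (hmax : MaximalSemireal F Ω) :
    PolyIVT F := by
  intro q a b hab ha hb
  obtain ⟨p, hp, hpq, hs⟩ := exists_irreducible_dvd_of_eval_mul_neg (mul_neg_of_neg_of_pos ha hb)
  obtain ⟨α, hα⟩ := IsAlgClosed.exists_aeval_eq_zero Ω p hp.degree_pos.ne'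
  obtain ⟨c, rfl⟩ := hmax α (isSemireal_adjoin_simple_of_sign_change hp hα hs)
  rw [aeval_algebraMap_apply, map_eq_zero, coe_aeval_eq_eval] at hα
  obtain ⟨m, hm⟩ := dvd_iff_isRoot.mpr hα
  have hunit : IsUnit m := (hp.isUnit_or_isUnit hm).resolve_left (not_isUnit_X_sub_C c)
  obtain ⟨k, -, rfl⟩ := isUnit_iff.mp hunit
  refine ⟨c, ?_, eval_eq_zero_of_dvd_of_eval_eq_zero hpq hα⟩
  simp only [hm, eval_mul, eval_sub, eval_X, eval_C] at hs
  have hsep : (a - c) * (b - c) < 0 :=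
    neg_of_mul_neg_left (by rwa [mul_mul_mul_comm] at hs) (mul_self_nonneg k)
  rcases mul_neg_iff.mp hsep with h | h
  · exact absurd hab (by linarith)
  · exact ⟨by linarith, by linarith⟩

end MaximalSemireal

variable {K : Type*} [Field K] [Algebra K Ω]

theorem isSemireal_sSup {c : Set (IntermediateField K Ω)} (hne : c.Nonempty)
    (hdir : DirectedOn (· ≤ ·) c) (hc : ∀ M ∈ c, IsSemireal M) :
    IsSemireal (sSup c : IntermediateField K Ω) := by
  have : Nonempty c := hne.to_subtype
  have hmem : ∀ x ∈ sSup c, ∃ M ∈ c, x ∈ M := fun x hx => by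
    rw [sSup_eq_iSup', ← SetLike.mem_coe, coe_iSup_of_directed hdir.directed_val] at hx
    obtain ⟨M, hM⟩ := Set.mem_iUnion.mp hx
    exact ⟨M, M.2, hM⟩
  have hsumSq : ∀ y : (sSup c : IntermediateField K Ω), IsSumSq y →
      ∃ M ∈ c, ∃ z : M, IsSumSq z ∧ (z : Ω) = y := by
    intro y hy
    induction hy with
    | zero => exact hne.imp fun M hM => ⟨hM, 0, .zero, by simp⟩
    | sq_add a _ ih =>
      obtain ⟨M, hM, z, hz, hzs⟩ := ih
      obtain ⟨M', hM', ha⟩ := hmem a a.2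
      obtain ⟨N, hN, hMN, hMN'⟩ := hdir M hM M' hM'
      refine ⟨N, hN, ⟨a, hMN' ha⟩ * ⟨a, hMN' ha⟩ + inclusion hMN z,
        (isSumSq_map_s19 (inclusion hMN).toRingHom hz).sq_add _, ?_⟩
      simp [hzs]
  refine ⟨fun hs hs0 => ?_⟩
  obtain ⟨M, hM, z, hz, hzs⟩ := hsumSq _ hs
  have := hc M hM
  refine IsSemireal.one_add_ne_zero hz (Subtype.ext ?_)
  simpa [hzs] using congrArg (algebraMap _ Ω) hs0

theorem exists_maximalSemireal (E : IntermediateField K Ω) [IsSemireal E] :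
    ∃ M : IntermediateField K Ω, E ≤ M ∧ IsSemireal M ∧ MaximalSemireal M Ω := by
  obtain ⟨M, hEM, hM⟩ := zorn_le_nonempty₀ {M : IntermediateField K Ω | IsSemireal M}
    (fun c hc hchain G hG => ⟨sSup c, isSemireal_sSup ⟨G, hG⟩ hchain.directedOn hc,
      fun _ => le_sSup⟩) E ‹_›
  refine ⟨M, hEM, hM.1, fun α hα => ?_⟩
  have hle : M ≤ M⟮α⟯.restrictScalars K := fun x hx => M⟮α⟯.algebraMap_mem ⟨x, hx⟩
  exact ⟨⟨α, hM.2 hα hle (mem_adjoin_simple_self M α)⟩, rfl⟩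

end MaximalSemireal

section HilbertSeventeenth

open IntermediateField

theorem exists_polyIVT_map_neg.{u} {K : Type u} [Field K] [CharZero K] {a : K}
    (ha : ¬ IsSumSq a) :
    ∃ (L : Type u) (_ : Field L) (_ : LinearOrder L) (_ : IsStrictOrderedRing L) (φ : K →+* L),
      PolyIVT L ∧ φ a < 0 := by
  have := isSemireal_of_not_isSumSq ha
  obtain ⟨s, hs⟩ := IsAlgClosed.exists_pow_nat_eq (algebraMap K (AlgebraicClosure K) (-a)) two_pos
  have := isSemireal_adjoin_simple_of_sq hs (by rwa [neg_neg])
  obtain ⟨M, hsM, _, hmax⟩ := exists_maximalSemireal K⟮s⟯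
  obtain ⟨_, _⟩ := hmax.exists_linearOrder
  refine ⟨M, inferInstance, inferInstance, inferInstance, algebraMap K M, hmax.polyIVT, ?_⟩
  have hsq : (⟨s, hsM (mem_adjoin_simple_self K s)⟩ : M) ^ 2 = -algebraMap K M a :=
    Subtype.ext (hs.trans (map_neg _ _))
  have hne : algebraMap K M a ≠ 0 := (_root_.map_ne_zero _).mpr (by rintro rfl; exact ha .zero)
  exact (neg_nonneg.mp (hsq ▸ sq_nonneg _)).lt_of_ne hne

theorem isSumSq_algebraMap_of_nonneg {n : ℕ} (K : Type*) [Field K]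
    [Algebra (MvPolynomial (Fin n) ℝ) K] [IsFractionRing (MvPolynomial (Fin n) ℝ) K]
    {f : MvPolynomial (Fin n) ℝ} (hf : ∀ x : Fin n → ℝ, 0 ≤ MvPolynomial.eval x f) :
    IsSumSq (algebraMap (MvPolynomial (Fin n) ℝ) K f) := by
  by_contra hcon
  have : CharZero K := charZero_of_injective_algebraMap
    (IsFractionRing.injective (MvPolynomial (Fin n) ℝ) K)
  obtain ⟨L, _, _, _, φ, hL, hneg⟩ := exists_polyIVT_map_neg hcon
  obtain ⟨x, hx⟩ := exists_eval_pos_iff_of_ringHom hL (φ.comp (algebraMap _ K)) (-f)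
  simp only [map_neg, neg_pos] at hx
  exact (hf x).not_gt (hx.mp hneg)

end HilbertSeventeenth

section Descent

variable {R : Type*} [CommRing R] [IsDomain R]

theorem exists_sum_sq_eq_mul_sq (K : Type*) [Field K] [Algebra R K] [IsFractionRing R K] {f : R}
    (hf : IsSumSq (algebraMap R K f)) :
    ∃ (n : ℕ) (g : Fin n → R) (h : R), h ≠ 0 ∧ ∑ i, g i ^ 2 = f * h ^ 2 := by
  obtain ⟨n, q, hq⟩ := exists_fin_sum_sq hf
  obtain ⟨b, hb⟩ := IsLocalization.exist_integer_multiples_of_finite (nonZeroDivisors R) q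
  choose g hg using hb
  refine ⟨n, g, b, nonZeroDivisors.ne_zero b.2, IsFractionRing.injective R K ?_⟩
  simp only [map_sum, map_mul, map_pow, hg, ← hq, Algebra.smul_def, mul_pow, ← Finset.mul_sum]
  exact mul_comm _ _

theorem exists_eq_mul_of_sum_sq_eq {f p : R} (hf : Squarefree f) (hp : Prime p) {ι : Type*}
    [Fintype ι] {g : ι → R} {h : R} (hg : ∑ i, g i ^ 2 = f * h ^ 2) (hdvd : ∀ i, p ∣ g i) :
    ∃ (g' : ι → R) (h' : R), h = p * h' ∧ ∑ i, g' i ^ 2 = f * h' ^ 2 := by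
  choose g' hg' using hdvd
  have hsum : p ^ 2 * ∑ i, g' i ^ 2 = f * h ^ 2 := by
    simp only [← hg, hg', mul_pow, Finset.mul_sum]
  have hph : p ∣ h := by
    by_contra hph
    have hpf : p ^ 2 ∣ f := hp.pow_dvd_of_dvd_mul_right 2 (mt hp.dvd_of_dvd_pow hph) ⟨_, hsum.symm⟩
    exact hp.not_isUnit (hf p (sq p ▸ hpf))
  obtain ⟨h', rfl⟩ := hph
  refine ⟨g', h', rfl, mul_left_cancel₀ (pow_ne_zero 2 hp.ne_zero) ?_⟩
  rw [hsum]
  ring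

theorem exists_dvd_sum_sq_forall_prime_not_dvd [UniqueFactorizationMonoid R] (K : Type*) [Field K]
    [Algebra R K] [IsFractionRing R K] {f : R} (hsf : Squarefree f)
    (hf : IsSumSq (algebraMap R K f)) :
    ∃ (n : ℕ) (g : Fin n → R), f ∣ ∑ i, g i ^ 2 ∧ ∀ p, Prime p → ∃ i, ¬ p ∣ g i := by
  obtain ⟨n, g, h, h0, hg⟩ := exists_sum_sq_eq_mul_sq K hf
  induction h using (wellFounded_dvdNotUnit (α := R)).induction generalizing g with
  | _ h ih =>
    by_cases hall : ∀ p, Prime p → ∃ i, ¬ p ∣ g i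
    · exact ⟨n, g, ⟨_, hg⟩, hall⟩
    push Not at hall
    obtain ⟨p, hp, hpg⟩ := hall
    obtain ⟨g', h', rfl, hg'⟩ := exists_eq_mul_of_sum_sq_eq hsf hp hg hpg
    have h0' : h' ≠ 0 := right_ne_zero_of_mul h0
    exact ih h' ⟨h0', p, hp.not_isUnit, mul_comm p h'⟩ g' h0' hg'

end Descent

section Dimension

theorem ringKrullDim_add_two_le {R B : Type*} [CommRing R] [IsDomain R]
    [UniqueFactorizationMonoid R] [CommRing B] {π : R →+* B} (hπ : Function.Surjective π)
    (hbot : RingHom.ker π ≠ ⊥) (hker : ∀ p, Prime p → ¬ RingHom.ker π ≤ Ideal.span {p}) :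
    ringKrullDim B + 2 ≤ ringKrullDim R := by
  rcases subsingleton_or_nontrivial B with hB | hB
  · simp [ringKrullDim_eq_bot_of_subsingleton]
  have hmono : StrictMono (PrimeSpectrum.comap π) :=
    Monotone.strictMono_of_injective (fun _ _ h => Ideal.comap_mono h)
      (PrimeSpectrum.comap_injective_of_surjective π hπ)
  rw [ringKrullDim, ringKrullDim, Order.krullDim_eq_iSup_length, Order.krullDim_eq_iSup_length,
    ← WithBot.coe_ofNat, ← WithBot.coe_add, ENat.iSup_add, WithBot.coe_le_coe, iSup_le_iff]
  intro l
  let l₀ : LTSeries (PrimeSpectrum R) := l.map _ hmono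
  have hle : RingHom.ker π ≤ l₀.head.asIdeal := Ideal.comap_mono (f := π) bot_le
  obtain ⟨p, hpQ, hp⟩ := l₀.head.isPrime.exists_mem_prime_of_ne_bot fun h =>
    hbot (le_bot_iff.mp (h ▸ hle))
  let P : PrimeSpectrum R := ⟨Ideal.span {p}, (Ideal.span_singleton_prime hp.ne_zero).mpr hp⟩
  have hPQ : P < l₀.head := lt_of_le_of_ne ((Ideal.span_singleton_le_iff_mem _).mpr hpQ)
    fun h => hker p hp (hle.trans_eq (congrArg PrimeSpectrum.asIdeal h).symm)
  have hbotP : (⊥ : PrimeSpectrum R) < P := lt_of_le_of_ne bot_le fun h =>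
    hp.ne_zero (Ideal.span_singleton_eq_bot.mp (congrArg PrimeSpectrum.asIdeal h).symm)
  let l₂ : LTSeries (PrimeSpectrum R) := (l₀.cons P hPQ).cons ⊥ hbotP
  have hlen : l₂.length = l.length + 2 :=
    (RelSeries.cons_length ..).trans (congrArg (· + 1) (RelSeries.cons_length ..))
  calc (l.length + 2 : ℕ∞) = (l₂.length : ℕ∞) := by simp [hlen]
    _ ≤ ⨆ l' : LTSeries (PrimeSpectrum R), (l'.length : ℕ∞) :=
      le_iSup (fun l' : LTSeries (PrimeSpectrum R) => (l'.length : ℕ∞)) l₂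

theorem ringKrullDim_le_of_injective_isIntegral {A B : Type*} [CommRing A] [CommRing B]
    {g : A →+* B} (hg : g.IsIntegral) (hinj : Function.Injective g) :
    ringKrullDim A ≤ ringKrullDim B := by
  algebraize [g]
  refine iSup_le fun l => ?_
  obtain ⟨P, hP⟩ := hg.comap_surjective hinj l.head
  have : P.asIdeal.LiesOver l.head.asIdeal := ⟨congrArg PrimeSpectrum.asIdeal hP.symm⟩
  obtain ⟨L, hL, -⟩ := Ideal.exists_ltSeries_of_hasGoingUp l P.asIdeal
  rw [← hL]
  exact Order.LTSeries.length_le_krullDim L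

open Polynomial

theorem exists_surjective_polynomial_ringHom (k : Type*) [CommRing k] {s : ℕ} (hs : s ≤ 1) :
    ∃ e : k[X] →+* MvPolynomial (Fin s) k, Function.Surjective e := by
  obtain rfl | rfl : s = 0 ∨ s = 1 := by omega
  · exact ⟨(MvPolynomial.isEmptyAlgEquiv k (Fin 0)).symm.toRingHom.comp constantCoeff,
      (MvPolynomial.isEmptyAlgEquiv k (Fin 0)).symm.surjective.comp constantCoeff_surjective⟩
  · exact ⟨(MvPolynomial.uniqueAlgEquiv k (Fin 1)).symm.toRingHom,
      (MvPolynomial.uniqueAlgEquiv k (Fin 1)).symm.surjective⟩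

theorem exists_finite_polynomial_ringHom (k : Type*) {B : Type*} [Field k] [CommRing B]
    [Algebra k B] [Algebra.FiniteType k B] (hdim : ringKrullDim B ≤ 1) :
    ∃ φ : k[X] →+* B, φ.Finite := by
  rcases subsingleton_or_nontrivial B with hB | hB
  · exact ⟨(aeval (0 : B)).toRingHom, .of_surjective _ fun b => ⟨0, Subsingleton.elim _ _⟩⟩
  obtain ⟨s, g, hinj, hfin⟩ := exists_finite_inj_algHom_of_fg k B
  have hs : ringKrullDim (MvPolynomial (Fin s) k) ≤ 1 :=
    (ringKrullDim_le_of_injective_isIntegral (g := g.toRingHom) hfin.to_isIntegral hinj).trans hdim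
  rw [MvPolynomial.ringKrullDim_of_isNoetherianRing, ringKrullDim_eq_zero_of_field,
    Nat.card_eq_fintype_card, Fintype.card_fin, zero_add] at hs
  obtain ⟨e, he⟩ := exists_surjective_polynomial_ringHom k (s := s) (by exact_mod_cast hs)
  exact ⟨g.toRingHom.comp e, RingHom.Finite.comp hfin (.of_surjective e he)⟩

end Dimension

section Reduction

/-- The set of sums of `n` squares of elements of `A`. -/
def sumsOfSquares (A : Type*) [CommRing A] (n : ℕ) : Set A :=
  {b | ∃ g : Fin n → A, b = ∑ i, g i ^ 2}

/-- The ideal generated by the squares whose negatives are sums of squares. For a finitely generated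
algebra over a real closed field its zero locus contains every real point, because `x ^ 2` and
`-x ^ 2` are both nonnegative there. -/
def realSquaresIdeal (A : Type*) [CommRing A] : Ideal A :=
  Ideal.span {y | ∃ x : A, y = x ^ 2 ∧ IsSumSq (-y)}

variable {A : Type*} [CommRing A]

theorem add_mem_sumsOfSquares {m n : ℕ} {a b : A} (ha : a ∈ sumsOfSquares A m)
    (hb : b ∈ sumsOfSquares A n) : a + b ∈ sumsOfSquares A (m + n) := by
  obtain ⟨g, rfl⟩ := ha
  obtain ⟨h, rfl⟩ := hb
  exact ⟨Fin.append g h, by simp [Fin.sum_univ_add]⟩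

theorem sq_mul_mem_sumsOfSquares {n : ℕ} {b : A} (hb : b ∈ sumsOfSquares A n) (a : A) :
    a ^ 2 * b ∈ sumsOfSquares A n := by
  obtain ⟨g, rfl⟩ := hb
  exact ⟨fun i => a * g i, by simp only [mul_pow, Finset.mul_sum]⟩

theorem sq_mem_realSquaresIdeal {n : ℕ} {g : Fin n → A} (hg : ∑ i, g i ^ 2 = 0) (i : Fin n) :
    g i ^ 2 ∈ realSquaresIdeal A := by
  have hneg : -g i ^ 2 = ∑ j ∈ Finset.univ.erase i, g j ^ 2 := by
    rw [← Finset.add_sum_erase _ _ (Finset.mem_univ i)] at hg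
    linear_combination -hg
  exact Ideal.subset_span
    ⟨g i, rfl, hneg ▸ IsSumSq.sum fun j _ => (IsSquare.sq (g j)).isSumSq⟩

theorem exists_forall_mul_sq_mem_sumsOfSquares [Invertible (2 : A)] {x : A}
    (hx : IsSumSq (-x ^ 2)) : ∃ n, ∀ a, a * x ^ 2 ∈ sumsOfSquares A n := by
  obtain ⟨n, u, hu⟩ := exists_fin_sum_sq hx
  refine ⟨1 + n, fun a => ?_⟩
  have hdiff : a * x ^ 2 = (⅟2 * (a + 1) * x) ^ 2 + (⅟2 * (a - 1)) ^ 2 * -x ^ 2 := by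
    linear_combination (-a * x ^ 2 * (2 * ⅟2 + 1)) * mul_invOf_self (2 : A)
  rw [hdiff]
  exact add_mem_sumsOfSquares ⟨fun _ => ⅟2 * (a + 1) * x, by simp⟩
    (sq_mul_mem_sumsOfSquares ⟨u, hu.symm⟩ _)

theorem exists_span_subset_sumsOfSquares {s : Finset A}
    (hs : ∀ y ∈ s, ∃ n, ∀ a, a * y ∈ sumsOfSquares A n) :
    ∃ n, (Ideal.span (s : Set A) : Set A) ⊆ sumsOfSquares A n := by
  classical
  induction s using Finset.induction_on with
  | empty => exact ⟨0, fun b hb => ⟨0, by simpa using hb⟩⟩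
  | insert y s _ ih =>
    obtain ⟨m, hm⟩ := hs y (Finset.mem_insert_self _ _)
    obtain ⟨n, hn⟩ := ih fun z hz => hs z (Finset.mem_insert_of_mem hz)
    refine ⟨m + n, fun b hb => ?_⟩
    rw [SetLike.mem_coe, Finset.coe_insert, Ideal.mem_span_insert] at hb
    obtain ⟨a, z, hz, rfl⟩ := hb
    exact add_mem_sumsOfSquares (hm a) (hn hz)

theorem exists_realSquaresIdeal_subset_sumsOfSquares [IsNoetherianRing A] [Invertible (2 : A)] :
    ∃ n, (realSquaresIdeal A : Set A) ⊆ sumsOfSquares A n := by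
  obtain ⟨s, hs, hspan⟩ := (Submodule.fg_span_iff_fg_span_finset_subset _).mp
    (IsNoetherian.noetherian (realSquaresIdeal A))
  obtain ⟨n, hn⟩ := exists_span_subset_sumsOfSquares (s := s) fun y hy => by
    obtain ⟨x, rfl, hx⟩ := hs hy
    exact exists_forall_mul_sq_mem_sumsOfSquares hx
  exact ⟨n, fun b hb => hn (hspan.le hb)⟩

end Reduction

theorem hasFinitePythagorasNumber_of_subset_sumsOfSquares {A : Type} [CommRing A] {I : Ideal A}
    {m : ℕ} (hI : (I : Set A) ⊆ sumsOfSquares A m) (h : HasFinitePythagorasNumber (A ⧸ I)) :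
    HasFinitePythagorasNumber A := by
  obtain ⟨n, hn⟩ := h
  refine ⟨n + m, fun b hb => ?_⟩
  obtain ⟨g, hg⟩ := hn _ (isSumSq_map_s19 (Ideal.Quotient.mk I) hb)
  choose g' hg' using fun i => Ideal.Quotient.mk_surjective (g i)
  have hmem : b - ∑ i, g' i ^ 2 ∈ I := by
    rw [← Ideal.Quotient.eq, hg, map_sum]
    simp only [map_pow, hg']
  have hsum := add_mem_sumsOfSquares ⟨g', rfl⟩ (hI hmem)
  rwa [add_sub_cancel] at hsum

section HermitianSquares

open Polynomial Matrix

/-- Coefficientwise complex conjugation on `ℂ[X]`, so that `ᴴ` denotes the adjoint of a polynomial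
matrix with respect to the real line. -/
noncomputable instance conjStarRing : StarRing ℂ[X] where
  star p := p.map (starRingEnd ℂ)
  star_involutive p := by simp [Polynomial.map_map]
  star_mul p q := by rw [Polynomial.map_mul, mul_comm]
  star_add p q := Polynomial.map_add _

theorem star_eq_map (p : ℂ[X]) : star p = p.map (starRingEnd ℂ) :=
  rfl

theorem eval_star (p : ℂ[X]) (μ : ℂ) : (star p).eval μ = star (p.eval (star μ)) := by
  simpa [star_eq_map] using eval_map_apply (starRingEnd ℂ) (star μ) (p := p)

theorem star_C (z : ℂ) : star (C z) = C (star z) :=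
  map_C _

theorem star_map_ofRealHom (p : ℝ[X]) :
    star (p.map Complex.ofRealHom) = p.map Complex.ofRealHom := by
  ext k
  simp [star_eq_map]

theorem natDegree_le_of_X_sub_C_mul_le {R : Type*} [CommRing R] [Nontrivial R] {μ : R} {p : R[X]}
    {d : ℕ} (h : ((X - C μ) * p).natDegree ≤ d + 1) : p.natDegree ≤ d := by
  rcases eq_or_ne p 0 with rfl | hp
  · simp
  · rw [(monic_X_sub_C μ).natDegree_mul' hp, natDegree_X_sub_C] at h
    omega

theorem coeff_dotProduct_star {ι : Type*} [Fintype ι] {u : ι → ℂ[X]} {d : ℕ}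
    (hu : ∀ i, (u i).natDegree ≤ d) :
    (u ⬝ᵥ star u).coeff (d + d) = (fun i => (u i).coeff d) ⬝ᵥ star fun i => (u i).coeff d := by
  simp only [dotProduct, finsetSum_coeff, Pi.star_apply, star_eq_map]
  refine Finset.sum_congr rfl fun i _ => ?_
  rw [coeff_mul_add_eq_of_natDegree_le (hu i) (natDegree_map_le.trans (hu i)), coeff_map]
  rfl

open scoped ComplexOrder in
theorem exists_isRoot_dotProduct_star {ι : Type*} [Fintype ι] {u : ι → ℂ[X]} {d : ℕ}
    (hu : ∀ i, (u i).natDegree ≤ d + 1) (hd : ¬ ∀ i, (u i).natDegree ≤ d) :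
    ∃ μ, (u ⬝ᵥ star u).IsRoot μ := by
  refine IsAlgClosed.exists_root _ fun hdeg => hd fun i => ?_
  have hlead : (fun i => (u i).coeff (d + 1)) = 0 := by
    rw [← dotProduct_self_star_eq_zero, ← coeff_dotProduct_star hu]
    exact coeff_eq_zero_of_degree_lt (hdeg.trans_lt (by exact_mod_cast Nat.succ_pos _))
  exact natDegree_le_pred (hu i) (congrFun hlead i)

theorem exists_mem_unitaryGroup_mulVec_single {ι : Type*} [Fintype ι] [DecidableEq ι] (i₀ : ι)
    {a : ι → ℂ} (ha : a ≠ 0) :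
    ∃ U ∈ unitaryGroup ι ℂ, ∃ c ≠ 0, U *ᵥ Pi.single i₀ c = a := by
  let x : EuclideanSpace ℂ ι := WithLp.toLp 2 a
  have hx : (‖x‖ : ℂ) ≠ 0 := by simpa [x] using ha
  have hv : Orthonormal ℂ (({i₀} : Set ι).domRestrict fun _ => (‖x‖ : ℂ)⁻¹ • x) :=
    ⟨fun _ => norm_smul_inv_norm (norm_ne_zero_iff.mp (by exact_mod_cast hx)),
      fun i j hij => absurd (Subsingleton.elim i j) hij⟩
  obtain ⟨b, hb⟩ := hv.exists_orthonormalBasis_extension_of_card_eq (by simp)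
  refine ⟨_, (EuclideanSpace.basisFun ι ℂ).toMatrix_orthonormalBasis_mem_unitary b, ‖x‖, hx, ?_⟩
  ext i
  suffices (‖x‖ : ℂ)⁻¹ * a i * ‖x‖ = a i by simpa [Module.Basis.toMatrix_apply, hb, x]
  field_simp

theorem exists_ne_zero_mulVec_eq_zero {R : Type*} [CommRing R] [Nontrivial R] {m n : ℕ}
    (hmn : m < n) (V : Matrix (Fin m) (Fin n) R) : ∃ u ≠ 0, V *ᵥ u = 0 := by
  by_contra! h
  have hinj : Function.Injective V.mulVecLin :=
    (injective_iff_map_eq_zero _).mpr fun u hu => by_contra fun hu0 => h u hu0 hu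
  exact hmn.not_ge (by simpa using card_le_of_injective R V.mulVecLin hinj)

variable {m n : ℕ}

theorem mul_conjTranspose_eq_submatrix_succ {W : Matrix (Fin m) (Fin (n + 1)) ℂ[X]}
    (hW : ∀ k, W k 0 = 0) :
    W * Wᴴ = W.submatrix id Fin.succ * (W.submatrix id Fin.succ)ᴴ := by
  ext1 k l
  simp [mul_apply, Fin.sum_univ_succ, hW]

-- Passing from `(V, u)` to `(V', u')` multiplies the first column of `V` by the unimodular function
-- `(X - C (star μ)) / (X - C μ)`, divides the first entry of `u` by it, and then divides `u` by
-- `X - C μ`.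
theorem exists_mulVec_eq_zero_natDegree_lt {V : Matrix (Fin m) (Fin (n + 1)) ℂ[X]}
    {u : Fin (n + 1) → ℂ[X]} (hVu : V *ᵥ u = 0) {d : ℕ}
    (hd : ∀ i, (u i).natDegree ≤ d + 1) {μ : ℂ} (hhead : (u 0).IsRoot (star μ))
    (hhead' : ¬ (u 0).IsRoot μ) (htail : ∀ i : Fin n, (u i.succ).IsRoot μ) :
    ∃ (V' : Matrix (Fin m) (Fin (n + 1)) ℂ[X]) (u' : Fin (n + 1) → ℂ[X]), V * Vᴴ = V' * V'ᴴ ∧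
      u' ≠ 0 ∧ V' *ᵥ u' = 0 ∧ ∀ i, (u' i).natDegree ≤ d := by
  have hcol : ∀ k, (V k 0).IsRoot μ := fun k => by
    have hk : (V k 0).eval μ * (u 0).eval μ = 0 := by
      simpa [mulVec, dotProduct, Fin.sum_univ_succ, eval_finsetSum, fun i => (htail i).eq_zero]
        using congrArg (eval μ) (congrFun hVu k)
    exact (mul_eq_zero.mp hk).resolve_right hhead'
  choose Z hZ using fun k => dvd_iff_isRoot.mpr (hcol k)
  choose y hy using fun i => dvd_iff_isRoot.mpr (htail i)
  obtain ⟨x, hx⟩ := dvd_iff_isRoot.mpr hhead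
  refine ⟨of fun k => Fin.cons ((X - C (star μ)) * Z k) fun j => V k j.succ, Fin.cons x y,
    ?_, fun h => hhead' ?_, ?_, Fin.cases ?_ fun i => ?_⟩
  · ext1 k l
    simp [mul_apply, Fin.sum_univ_succ, hZ, star_eq_map]
    ring
  · have hx0 : x = 0 := by simpa using congrFun h 0
    simp [hx, hx0]
  · ext1 k
    apply mul_left_cancel₀ (X_sub_C_ne_zero μ)
    have hk := congrFun hVu k
    simp only [mulVec, dotProduct, Fin.sum_univ_succ, hZ, hx, hy, mul_left_comm _ (X - C μ),
      ← Finset.mul_sum] at hk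
    simpa [mulVec, dotProduct, Fin.sum_univ_succ, mul_add, mul_assoc, mul_left_comm] using hk
  · exact natDegree_le_of_X_sub_C_mul_le (hx ▸ hd 0)
  · exact natDegree_le_of_X_sub_C_mul_le (hy i ▸ hd i.succ)

theorem exists_unitary_rotation (V : Matrix (Fin m) (Fin (n + 1)) ℂ[X]) {u : Fin (n + 1) → ℂ[X]}
    {μ : ℂ} (hu : ¬ ∀ i, (u i).IsRoot μ) {d : ℕ} (hd : ∀ i, (u i).natDegree ≤ d) :
    ∃ (V' : Matrix (Fin m) (Fin (n + 1)) ℂ[X]) (u' : Fin (n + 1) → ℂ[X]), V * Vᴴ = V' * V'ᴴ ∧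
      V *ᵥ u = V' *ᵥ u' ∧ u ⬝ᵥ star u = u' ⬝ᵥ star u' ∧ (∀ i, (u' i).natDegree ≤ d) ∧
      ¬ (u' 0).IsRoot μ ∧ ∀ i : Fin n, (u' i.succ).IsRoot μ := by
  obtain ⟨U, hU, c, hc, hUc⟩ := exists_mem_unitaryGroup_mulVec_single 0
    (a := fun i => (u i).eval μ) fun h => hu (congrFun h)
  let Q : Matrix (Fin (n + 1)) (Fin (n + 1)) ℂ[X] := U.map C
  have hQstar : Qᴴ = Uᴴ.map C :=
    (conjTranspose_map C fun z => (star_C z).symm).symm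
  have hQ : Q * Qᴴ = 1 := by
    rw [hQstar, ← Matrix.map_mul, ← star_eq_conjTranspose, mem_unitaryGroup_iff.mp hU,
      Matrix.map_one C C_0 C_1]
  have heval : (fun i => ((Qᴴ *ᵥ u) i).eval μ) = Pi.single 0 c := by
    have hQeval : Qᴴ.map (evalRingHom μ) = Uᴴ := by ext; simp [hQstar]
    have hUU : Uᴴ * U = 1 := mem_unitaryGroup_iff'.mp hU
    funext i
    calc ((Qᴴ *ᵥ u) i).eval μ = (Uᴴ *ᵥ (U *ᵥ Pi.single 0 c)) i := by
          rw [hUc, ← hQeval]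
          exact RingHom.map_mulVec (evalRingHom μ) Qᴴ u i
      _ = (Pi.single 0 c : Fin (n + 1) → ℂ) i := by rw [mulVec_mulVec, hUU, one_mulVec]
  refine ⟨V * Q, Qᴴ *ᵥ u, ?_, ?_, ?_, fun i => ?_, ?_, fun i => ?_⟩
  · rw [conjTranspose_mul, Matrix.mul_assoc, ← Matrix.mul_assoc Q, hQ, Matrix.one_mul]
  · rw [mulVec_mulVec, Matrix.mul_assoc, hQ, Matrix.mul_one]
  · rw [star_mulVec, conjTranspose_conjTranspose, dotProduct_comm (Qᴴ *ᵥ u),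
      ← dotProduct_mulVec, mulVec_mulVec, hQ, one_mulVec, dotProduct_comm]
  · rw [hQstar]
    exact natDegree_sum_le_of_forall_le Finset.univ (fun j => C (Uᴴ i j) * u j) fun j _ =>
      (natDegree_C_mul_le _ _).trans (hd j)
  · simpa using (congrFun heval 0).trans_ne hc
  · simpa using congrFun heval i.succ

theorem exists_gram_of_mulVec_eq_zero {V : Matrix (Fin m) (Fin (n + 1)) ℂ[X]}
    {u : Fin (n + 1) → ℂ[X]} (hu0 : u ≠ 0) (hVu : V *ᵥ u = 0) {d : ℕ}
    (hd : ∀ i, (u i).natDegree ≤ d) :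
    ∃ W : Matrix (Fin m) (Fin n) ℂ[X], V * Vᴴ = W * Wᴴ := by
  induction d generalizing V u with
  | zero =>
    have hconst {p : ℂ[X]} (hp : p.natDegree ≤ 0) (h0 : p.IsRoot 0) : p = 0 := by
      rw [eq_C_of_natDegree_le_zero hp] at h0 ⊢
      simpa using h0
    obtain ⟨V', u', hV', hVu', -, hd', hhead, htail⟩ := exists_unitary_rotation V (μ := 0)
      (fun h => hu0 (funext fun i => hconst (hd i) (h i))) hd
    refine ⟨_, hV'.trans (mul_conjTranspose_eq_submatrix_succ fun k => ?_)⟩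
    have hk : V' k 0 * u' 0 = 0 := by
      simpa [mulVec, dotProduct, Fin.sum_univ_succ, fun i => hconst (hd' i.succ) (htail i)]
        using congrFun (hVu'.symm.trans hVu) k
    exact (mul_eq_zero.mp hk).resolve_right fun h0 => hhead (h0 ▸ IsRoot.def.mpr eval_zero)
  | succ d ih =>
    by_cases hdrop : ∀ i, (u i).natDegree ≤ d
    · exact ih hu0 hVu hdrop
    obtain ⟨μ, hμ⟩ := exists_isRoot_dotProduct_star hd hdrop
    by_cases hroot : ∀ i, (u i).IsRoot μ
    · choose y hy using fun i => dvd_iff_isRoot.mpr (hroot i)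
      obtain rfl : u = (X - C μ) • y := funext hy
      refine ih (right_ne_zero_of_smul hu0) ?_ fun i => natDegree_le_of_X_sub_C_mul_le (hd i)
      rw [mulVec_smul] at hVu
      exact (smul_eq_zero.mp hVu).resolve_left (X_sub_C_ne_zero μ)
    obtain ⟨V₁, u₁, hV₁, hVu₁, hdot, hd₁, hhead, htail⟩ := exists_unitary_rotation V hroot hd
    have hhead' : (u₁ 0).IsRoot (star μ) := by
      have hprod : (u₁ 0).eval μ * star ((u₁ 0).eval (star μ)) = 0 := by
        rw [hdot, IsRoot] at hμ
        simpa only [dotProduct, Fin.sum_univ_succ, Pi.star_apply, eval_add, eval_mul, eval_star,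
          eval_finsetSum, (htail _).eq_zero, zero_mul, Finset.sum_const_zero, add_zero] using hμ
      exact star_eq_zero.mp ((mul_eq_zero.mp hprod).resolve_left hhead)
    obtain ⟨V₂, u₂, hV₂, hu₂, hVu₂, hd₂⟩ :=
      exists_mulVec_eq_zero_natDegree_lt (hVu₁ ▸ hVu) hd₁ hhead' hhead htail
    rw [hV₁, hV₂]
    exact ih hu₂ hVu₂ hd₂

theorem exists_gram_square (V : Matrix (Fin m) (Fin (m + n)) ℂ[X]) :
    ∃ W : Matrix (Fin m) (Fin m) ℂ[X], V * Vᴴ = W * Wᴴ := by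
  induction n with
  | zero => exact ⟨V, rfl⟩
  | succ n ih =>
    obtain ⟨u, hu0, hVu⟩ := exists_ne_zero_mulVec_eq_zero (by omega) V
    obtain ⟨V', hV'⟩ := exists_gram_of_mulVec_eq_zero hu0 hVu fun i =>
      Finset.le_sup (f := fun i => (u i).natDegree) (Finset.mem_univ i)
    exact hV' ▸ ih V'

theorem exists_map_add_I_mul_map (p : ℂ[X]) : ∃ a b : ℝ[X],
    p = a.map Complex.ofRealHom + C Complex.I * b.map Complex.ofRealHom := by
  induction p using Polynomial.induction_on' with
  | add p q hp hq =>
    obtain ⟨a, b, rfl⟩ := hp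
    obtain ⟨a', b', rfl⟩ := hq
    exact ⟨a + a', b + b', by simp only [Polynomial.map_add]; ring⟩
  | monomial n z =>
    refine ⟨monomial n z.re, monomial n z.im, ?_⟩
    rw [map_monomial, map_monomial, C_mul_monomial, ← map_add, mul_comm Complex.I]
    exact congrArg _ (Complex.re_add_im z).symm

theorem eq_of_map_add_I_mul_map_eq {a b a' b' : ℝ[X]}
    (h : a.map Complex.ofRealHom + C Complex.I * b.map Complex.ofRealHom =
      a'.map Complex.ofRealHom + C Complex.I * b'.map Complex.ofRealHom) : a = a' := by
  ext k
  simpa using congrArg (fun r => (r.coeff k).re) h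

theorem map_add_I_mul_map_mul_star (a b c d : ℝ[X]) :
    (a.map Complex.ofRealHom + C Complex.I * b.map Complex.ofRealHom) *
        star (c.map Complex.ofRealHom + C Complex.I * d.map Complex.ofRealHom) =
      (a * c + b * d).map Complex.ofRealHom +
        C Complex.I * (b * c - a * d).map Complex.ofRealHom := by
  have hII : (C Complex.I : ℂ[X]) * C Complex.I = -1 := by simp [← C_mul]
  rw [star_add, star_mul', star_C, star_map_ofRealHom, star_map_ofRealHom, Complex.star_def,
    Complex.conj_I, C_neg]
  simp only [Polynomial.map_add, Polynomial.map_sub, Polynomial.map_mul]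
  linear_combination (-b.map Complex.ofRealHom * d.map Complex.ofRealHom) * hII

theorem exists_mul_transpose_eq_add (V : Matrix (Fin m) (Fin n) ℝ[X]) :
    ∃ A B : Matrix (Fin m) (Fin m) ℝ[X], V * Vᵀ = A * Aᵀ + B * Bᵀ := by
  obtain ⟨W, hW⟩ := exists_gram_square (n := n)
    (of fun k => Fin.append 0 fun i => (V k i).map Complex.ofRealHom)
  choose A B hAB using fun k j => exists_map_add_I_mul_map (W k j)
  refine ⟨of A, of B, ?_⟩
  ext1 k l
  refine eq_of_map_add_I_mul_map_eq (b := 0) (b' := ∑ j, (B k j * A l j - A k j * B l j)) ?_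
  calc ((V * Vᵀ) k l).map Complex.ofRealHom + C Complex.I * (0 : ℝ[X]).map Complex.ofRealHom
    _ = (W * Wᴴ) k l := by
      rw [← hW]
      simp [mul_apply, Fin.sum_univ_add, star_map_ofRealHom, Polynomial.map_sum]
    _ = ((of A * (of A)ᵀ + of B * (of B)ᵀ) k l).map Complex.ofRealHom +
        C Complex.I * (∑ j, (B k j * A l j - A k j * B l j)).map Complex.ofRealHom := by
      simp only [mul_apply, conjTranspose_apply, hAB, map_add_I_mul_map_mul_star,
        Matrix.add_apply,
        transpose_apply, of_apply, Polynomial.map_sum, Finset.sum_add_distrib, Finset.mul_sum,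
        Polynomial.map_add]

end HermitianSquares

section FinitePythagorasNumber

open Polynomial Matrix

theorem sum_sq_sum_mul_eq {R B : Type*} [CommRing R] [CommRing B] (φ : R →+* B) {m n : ℕ}
    (V : Matrix (Fin m) (Fin n) R) (e : Fin m → B) :
    ∑ i, (∑ k, φ (V k i) * e k) ^ 2 = e ⬝ᵥ ((V * Vᵀ).map φ *ᵥ e) := by
  have hdot : (fun i => ∑ k, φ (V k i) * e k) = (V.map φ)ᵀ *ᵥ e := rfl
  calc ∑ i, (∑ k, φ (V k i) * e k) ^ 2 = ((V.map φ)ᵀ *ᵥ e) ⬝ᵥ ((V.map φ)ᵀ *ᵥ e) := by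
        simp only [sq, ← hdot, dotProduct]
    _ = e ⬝ᵥ ((V * Vᵀ).map φ *ᵥ e) := by
        rw [Matrix.map_mul, ← mulVec_mulVec, dotProduct_mulVec, mulVec_transpose,
          dotProduct_mulVec, dotProduct_mulVec, transpose_map]

theorem hasFinitePythagorasNumber_of_finite {B : Type} [CommRing B] {φ : ℝ[X] →+* B}
    (hφ : φ.Finite) : HasFinitePythagorasNumber B := by
  algebraize [φ]
  obtain ⟨m, e, he⟩ := Module.Finite.exists_fin (R := ℝ[X]) (M := B)
  refine ⟨m + m, fun b hb => ?_⟩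
  obtain ⟨n, g, rfl⟩ := exists_fin_sum_sq hb
  choose v hv using fun i => (Submodule.mem_span_range_iff_exists_fun ℝ[X]).mp
    (show g i ∈ Submodule.span ℝ[X] (Set.range e) from he ▸ Submodule.mem_top)
  obtain ⟨P, Q, hPQ⟩ := exists_mul_transpose_eq_add (of fun k i => v i k)
  have hsum : ∑ i, g i ^ 2 =
      ∑ j, (∑ k, φ (P k j) * e k) ^ 2 + ∑ j, (∑ k, φ (Q k j) * e k) ^ 2 := by
    calc ∑ i, g i ^ 2 = ∑ i, (∑ k, φ (v i k) * e k) ^ 2 := by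
          simp only [← hv, Algebra.smul_def]
          rfl
      _ = e ⬝ᵥ ((P * Pᵀ + Q * Qᵀ).map φ *ᵥ e) := hPQ ▸ sum_sq_sum_mul_eq φ _ e
      _ = _ := by
          rw [Matrix.map_add φ (map_add φ), add_mulVec, dotProduct_add, sum_sq_sum_mul_eq,
            sum_sq_sum_mul_eq]
  rw [hsum]
  exact add_mem_sumsOfSquares ⟨_, rfl⟩ ⟨_, rfl⟩

theorem hasFinitePythagorasNumber_of_ringKrullDim_le {A : Type} [CommRing A] [Algebra ℝ A]
    [Algebra.FiniteType ℝ A] (hdim : ringKrullDim (A ⧸ realSquaresIdeal A) ≤ 1) :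
    HasFinitePythagorasNumber A := by
  have := Algebra.FiniteType.isNoetherianRing ℝ A
  have : Invertible (2 : A) :=
    (Invertible.map (algebraMap ℝ A) 2).copy _ (map_ofNat (algebraMap ℝ A) 2).symm
  obtain ⟨m, hm⟩ := exists_realSquaresIdeal_subset_sumsOfSquares (A := A)
  obtain ⟨φ, hφ⟩ := exists_finite_polynomial_ringHom ℝ hdim
  exact hasFinitePythagorasNumber_of_subset_sumsOfSquares hm
    (hasFinitePythagorasNumber_of_finite hφ)

end FinitePythagorasNumber

section Semidefinite

open MvPolynomial

variable {n : ℕ} {f : MvPolynomial (Fin n) ℝ}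

theorem ringKrullDim_quotient_realSquaresIdeal_add_two_le (hsf : Squarefree f)
    (hf : ∀ x, 0 ≤ eval x f) :
    ringKrullDim ((MvPolynomial (Fin n) ℝ ⧸ Ideal.span {f}) ⧸
      realSquaresIdeal (MvPolynomial (Fin n) ℝ ⧸ Ideal.span {f})) + 2 ≤ n := by
  let q := Ideal.Quotient.mk (Ideal.span {f})
  let π := (Ideal.Quotient.mk (realSquaresIdeal (MvPolynomial (Fin n) ℝ ⧸ Ideal.span {f}))).comp q
  have hq (p : MvPolynomial (Fin n) ℝ) : q p = 0 ↔ f ∣ p := Ideal.Quotient.eq_zero_iff_dvd f p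
  have hπ : Function.Surjective π :=
    Ideal.Quotient.mk_surjective.comp Ideal.Quotient.mk_surjective
  have hfπ : f ∈ RingHom.ker π := by
    rw [RingHom.mem_ker, RingHom.comp_apply, (hq f).mpr dvd_rfl, map_zero]
  obtain ⟨m, g, hdvd, hg⟩ := exists_dvd_sum_sq_forall_prime_not_dvd
    (FractionRing (MvPolynomial (Fin n) ℝ)) hsf (isSumSq_algebraMap_of_nonneg _ hf)
  have hgπ (i : Fin m) : g i ^ 2 ∈ RingHom.ker π := by
    have hsum : ∑ i, q (g i) ^ 2 = 0 := by simpa only [map_sum, map_pow] using (hq _).mpr hdvd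
    rw [RingHom.mem_ker, RingHom.comp_apply, map_pow q, Ideal.Quotient.eq_zero_iff_mem]
    exact sq_mem_realSquaresIdeal hsum i
  have hdim := ringKrullDim_add_two_le hπ (fun hbot => hsf.ne_zero (by simpa [hbot] using hfπ))
    fun p hp hle => by
      obtain ⟨i, hi⟩ := hg p hp
      exact hi (hp.dvd_of_dvd_pow (Ideal.mem_span_singleton.mp (hle (hgπ i))))
  simpa [MvPolynomial.ringKrullDim_of_isNoetherianRing, ringKrullDim_eq_zero_of_field] using hdim

theorem hasFinitePythagorasNumber_of_nonneg {f : MvPolynomial (Fin 3) ℝ} (hsf : Squarefree f)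
    (hf : ∀ x, 0 ≤ eval x f) :
    HasFinitePythagorasNumber (MvPolynomial (Fin 3) ℝ ⧸ Ideal.span {f}) := by
  refine hasFinitePythagorasNumber_of_ringKrullDim_le
    (ENat.WithBot.add_le_add_natCast_right_iff (c := 2).mp ?_)
  exact (ringKrullDim_quotient_realSquaresIdeal_add_two_le hsf hf).trans_eq
    (by norm_num : ((3 : ℕ) : WithBot ℕ∞) = 1 + (2 : ℕ))

end Semidefinite

/-- If `f ∈ ℝ[x, y, z]` is square-free and semidefinite on `ℝ³`, then the Pythagoras
number of `ℝ[x, y, z]/(f)` is finite. -/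
theorem stmt19 (f : MvPolynomial (Fin 3) ℝ) (hsf : Squarefree f)
    (hsemi : (∀ x : Fin 3 → ℝ, 0 ≤ MvPolynomial.eval x f) ∨
      (∀ x : Fin 3 → ℝ, MvPolynomial.eval x f ≤ 0)) :
    HasFinitePythagorasNumber (MvPolynomial (Fin 3) ℝ ⧸ Ideal.span {f}) := by
  rcases hsemi with hnonneg | hnonpos
  · exact hasFinitePythagorasNumber_of_nonneg hsf hnonneg
  · rw [← Ideal.span_singleton_neg]
    exact hasFinitePythagorasNumber_of_nonneg
      (fun p hp => hsf p (dvd_neg.mp hp)) fun x => by simpa using hnonpos x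
end
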